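/- arXiv:1904.00146 — 2 statements merged into one kernel-verified Lean document; each statement's English description precedes it below -/
import Mathlib

section
/- Let ℓ > r ≥ 2 be integers and let F be a 2-graph (simple graph) with chromatic number χ(F) = ℓ. Then the Turán density of the expansion H_F^(r) satisfies π(H_F^(r)) = (r!/(ℓ−1)^r)·C(ℓ−1, r); that is, the sequence ex(n, H_F^(r))/C(n, r) converges as n → ∞ to (r!/(ℓ−1)^r)·C(ℓ−1, r). -/
open Finset

/-- An `r`-graph: a set of edges each of which has exactly `r` vertices. -/
def IsRGraph {α : Type*} (r : ℕ) (G : Finset (Finset α)) : Prop :=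
  ∀ e ∈ G, e.card = r

/-- `G` contains a (not necessarily induced) copy of `H`, i.e. a subgraph isomorphic to `H`. -/
def ContainsCopy {α β : Type*} [DecidableEq β]
    (H : Finset (Finset α)) (G : Finset (Finset β)) : Prop :=
  ∃ f : α → β, Function.Injective f ∧ ∀ e ∈ H, e.image f ∈ G

/-- There is a homomorphism from `H` to `G`. -/
def ContainsHom {α β : Type*} [DecidableEq β]
    (H : Finset (Finset α)) (G : Finset (Finset β)) : Prop :=
  ∃ f : α → β, ∀ e ∈ H, e.image f ∈ G

/-- The Turán number `ex(n, H)` for `r`-graphs: the maximum number of edges in an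
`n`-vertex `H`-free `r`-graph. -/
noncomputable def exNum {α : Type*} (r n : ℕ) (H : Finset (Finset α)) : ℕ :=
  sSup {m | ∃ G : Finset (Finset (Fin n)), IsRGraph r G ∧ ¬ ContainsCopy H G ∧ G.card = m}

/-- The two endpoints of an edge of a simple graph, as a `Finset`. -/
def sym2ToFinset {α : Type*} [Fintype α] [DecidableEq α] (e : Sym2 α) : Finset α :=
  Finset.univ.filter (· ∈ e)

/-- The expansion `H_F^(r)` of a 2-graph `F`: each edge of `F` is enlarged with a new set of
`r - 2` vertices, distinct edges getting disjoint sets of new vertices. -/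
def expansion {α : Type*} [Fintype α] [DecidableEq α] (r : ℕ)
    (F : SimpleGraph α) [DecidableRel F.Adj] :
    Finset (Finset (α ⊕ (F.edgeFinset × Fin (r - 2)))) :=
  F.edgeFinset.attach.image (fun e =>
    (sym2ToFinset e.1).image Sum.inl ∪
      (Finset.univ : Finset (Fin (r - 2))).image (fun i => Sum.inr (e, i)))

/-- The complete balanced `l`-partite `r`-graph `T_r(n, l)` on vertex set `Fin n`,
with vertex classes the residue classes modulo `l` (which differ in size by at most 1):
its edges are all `r`-sets meeting each class in at most one vertex. -/
def turanGraph (r n l : ℕ) : Finset (Finset (Fin n)) :=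
  (Finset.univ.powersetCard r).filter
    (fun e => ∀ u ∈ e, ∀ v ∈ e, (u : ℕ) % l = (v : ℕ) % l → u = v)

/-- `t_r(n, l)`, the number of edges of `T_r(n, l)`. -/
def turanNum (r n l : ℕ) : ℕ := (turanGraph r n l).card

/-- Two `r`-graphs on `Fin n` are `ε`-close if some relabelling of the first one has
symmetric difference at most `ε·C(n,r)` with the second one. -/
def EpsClose (r n : ℕ) (ε : ℝ) (G₁ G₂ : Finset (Finset (Fin n))) : Prop :=
  ∃ σ : Fin n ≃ Fin n,
    ((((G₁.image fun e => e.image σ) \ G₂) ∪ (G₂ \ (G₁.image fun e => e.image σ))).card : ℝ)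
      ≤ ε * (n.choose r)

/-- `G` contains a member of the decomposition family `𝓕_F` (w.r.t. proper `ℓ`-colourings of
`F`) as a subgraph, with all its vertices placed inside `S`.  A member of `𝓕_F` is obtained
from `F` by deleting the vertices of `ℓ - 2` colour classes of a proper `ℓ`-colouring of `F`. -/
def ContainsDecompMemberOn {α β : Type*} [DecidableEq β] (ℓ : ℕ) (F : SimpleGraph α)
    (G : Finset (Finset β)) (S : Set β) : Prop :=
  ∃ c : α → Fin ℓ, (∀ ⦃u v⦄, F.Adj u v → c u ≠ c v) ∧
    ∃ i j : Fin ℓ, i ≠ j ∧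
      ∃ f : {v : α // c v = i ∨ c v = j} → β, Function.Injective f ∧
        (∀ v, f v ∈ S) ∧
        ∀ u v : {v : α // c v = i ∨ c v = j}, F.Adj u.1 v.1 → ({f u, f v} : Finset β) ∈ G

/-- `biex(n, F) = ex(n, 𝓕_F)`: the maximum number of edges in an `n`-vertex 2-graph containing
no member of the decomposition family of `F` (w.r.t. proper `ℓ`-colourings) as a subgraph. -/
noncomputable def biex {α : Type*} (ℓ : ℕ) (F : SimpleGraph α) (n : ℕ) : ℕ :=
  sSup {m | ∃ G : Finset (Finset (Fin n)), IsRGraph 2 G ∧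
    ¬ ContainsDecompMemberOn ℓ F G Set.univ ∧ G.card = m}

/-- The Lagrangian of an `r`-graph `G`:
`λ(G) = max { Σ_{e ∈ G} Π_{i ∈ e} w i }` over all legal weightings `w`. -/
noncomputable def lagrangian {α : Type*} [Fintype α] (G : Finset (Finset α)) : ℝ :=
  sSup {x : ℝ | ∃ w : α → ℝ, (∀ i, 0 ≤ w i) ∧ (∑ i, w i) = 1 ∧
    x = ∑ e ∈ G, ∏ i ∈ e, w i}

namespace TDE

/-- ordered cliques -/
def Clq {V : Type*} (Γ : SimpleGraph V) {s : ℕ} (x : Fin s → V) : Prop :=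
  ∀ i j, i ≠ j → Γ.Adj (x i) (x j)

open scoped Classical in
/-- number of ordered cliques -/
noncomputable def cN {V : Type*} [Fintype V] (Γ : SimpleGraph V) (s : ℕ) : ℕ :=
  (univ.filter (fun x : Fin s → V => Clq Γ x)).card

open scoped Classical in
/-- number of extensions -/
noncomputable def cE {V : Type*} [Fintype V] (Γ : SimpleGraph V) {s : ℕ} (x : Fin s → V) : ℕ :=
  (univ.filter (fun v : V => ∀ j, Γ.Adj v (x j))).card

lemma clq_insertNth {V : Type*} (Γ : SimpleGraph V) {s : ℕ} (i : Fin (s+1)) (v : V)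
    (y : Fin s → V) :
    Clq Γ (i.insertNth v y : Fin (s+1) → V) ↔ Clq Γ y ∧ ∀ j, Γ.Adj v (y j) := by
  constructor
  · intro h
    refine ⟨fun a b hab => ?_, fun j => ?_⟩
    · have := h (i.succAbove a) (i.succAbove b) (by simpa using hab)
      simpa using this
    · have := h i (i.succAbove j) (by simp)
      simpa using this
  · rintro ⟨h1, h2⟩ a b
    rcases Fin.eq_self_or_eq_succAbove i a with rfl | ⟨a, rfl⟩
    · rcases Fin.eq_self_or_eq_succAbove a b with rfl | ⟨b, rfl⟩
      · simp
      · intro _; simpa using h2 b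
    · rcases Fin.eq_self_or_eq_succAbove i b with rfl | ⟨b, rfl⟩
      · intro _; simpa using (h2 a).symm
      · intro hab; simpa using h1 a b (by simpa using hab)

open scoped Classical in
lemma sum_removeNth {V : Type*} [Fintype V] (Γ : SimpleGraph V) {s : ℕ} (i : Fin (s+1))
    (g : (Fin s → V) → ℕ) :
    ∑ x ∈ univ.filter (fun x : Fin (s+1) → V => Clq Γ x), g (i.removeNth (α := fun _ => V) x) =
    ∑ y ∈ univ.filter (fun y : Fin s → V => Clq Γ y), cE Γ y * g y := by
  rw [sum_filter, sum_filter, ← (Fin.insertNthEquiv (fun _ => V) i).sum_comp,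
    Fintype.sum_prod_type_right]
  refine sum_congr rfl fun y _ => ?_
  have hE : ∀ v, (Fin.insertNthEquiv (fun _ => V) i) (v, y) = i.insertNth v y := fun _ => rfl
  simp only [hE, clq_insertNth, Fin.removeNth_insertNth]
  split_ifs with h
  · simp only [h, true_and, cE]
    rw [← sum_filter, sum_const, smul_eq_mul]
  · simp [h]

open scoped Classical in
lemma cN_succ {V : Type*} [Fintype V] (Γ : SimpleGraph V) (s : ℕ) :
    cN Γ (s+1) =
      ∑ y ∈ univ.filter (fun y : Fin s → V => Clq Γ y), cE Γ y := by
  classical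
  have := sum_removeNth Γ (0 : Fin (s+1)) (fun _ => 1)
  simp only [sum_const, smul_eq_mul, mul_one] at this
  simpa [cN] using this

open scoped Classical in
lemma ext_bound {V : Type*} [Fintype V] (Γ : SimpleGraph V) {s : ℕ} (x : Fin (s+1) → V) :
    ∑ i, cE Γ (Fin.removeNth (α := fun _ => V) i x) ≤ s * cE Γ x + Fintype.card V := by
  simp only [cE, card_filter]
  rw [sum_comm, mul_sum, ← card_univ, card_eq_sum_ones, ← sum_add_distrib]
  refine sum_le_sum fun v _ => ?_
  split_ifs with h
  · calc _ ≤ ∑ i : Fin (s+1), 1 := sum_le_sum fun i _ => by split_ifs <;> simp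
      _ = _ := by simp
  · push Not at h
    obtain ⟨j, hj⟩ := h
    rw [← card_filter]
    simp only [mul_zero, zero_add]
    rw [card_le_one]
    have key : ∀ i : Fin (s+1), (∀ k, Γ.Adj v (Fin.removeNth (α := fun _ => V) i x k)) → i = j := by
      intro i hi
      by_contra hne
      obtain ⟨k, rfl⟩ := Fin.exists_succAbove_eq (Ne.symm hne)
      exact hj (hi k)
    intro a ha b hb
    simp only [mem_filter, mem_univ, true_and] at ha hb
    rw [key a ha, key b hb]

lemma moon_moser {V : Type*} [Fintype V] (Γ : SimpleGraph V) (s : ℕ) :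
    (s+1) * cN Γ (s+1) ^ 2 ≤ cN Γ s * (s * cN Γ (s+2) + Fintype.card V * cN Γ (s+1)) := by
  classical
  have h1 : ∑ x ∈ univ.filter (fun x : Fin (s+1) → V => Clq Γ x), ∑ i, cE Γ (Fin.removeNth (α := fun _ => V) i x)
      ≤ s * cN Γ (s+2) + Fintype.card V * cN Γ (s+1) := by
    calc _ ≤ ∑ x ∈ univ.filter (fun x : Fin (s+1) → V => Clq Γ x), (s * cE Γ x + Fintype.card V) :=
          sum_le_sum fun x _ => ext_bound Γ x
      _ = _ := by
          rw [sum_add_distrib, ← mul_sum, sum_const, smul_eq_mul, cN_succ Γ (s+1), cN]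
          ring_nf
          
  rw [sum_comm] at h1
  simp only [sum_removeNth Γ _ (fun y => cE Γ y)] at h1
  rw [sum_const, smul_eq_mul, card_univ, Fintype.card_fin] at h1
  have h2 := sq_sum_le_card_mul_sum_sq (s := univ.filter (fun y : Fin s → V => Clq Γ y))
    (f := fun y => cE Γ y)
  have h3 : cN Γ (s+1) = ∑ y ∈ univ.filter (fun y : Fin s → V => Clq Γ y), cE Γ y := cN_succ Γ s
  calc (s+1) * cN Γ (s+1) ^ 2 ≤ (s+1) * (cN Γ s * ∑ y ∈ univ.filter (fun y : Fin s → V => Clq Γ y), cE Γ y ^ 2) := by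
        gcongr
        rw [h3]
        exact h2
    _ = cN Γ s * ((s+1) * ∑ y ∈ univ.filter (fun y : Fin s → V => Clq Γ y), cE Γ y * cE Γ y) := by
        simp only [sq]; ring
    _ ≤ _ := by gcongr

lemma seq_lemma (L : ℕ) (hL : 1 ≤ L) (k : ℕ) : ∀ ε : ℝ, 0 < ε → ∃ δ : ℝ, 0 < δ ∧ ∀ t : ℕ → ℝ,
    (∀ s, 0 ≤ t s) → (∀ s, t s ≤ 1) →
    (∀ s : ℕ, (s + 1 : ℝ) * t (s+1) ^ 2 ≤ s * t s * t (s+2) + t s * t (s+1)) →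
    t (L+1) ≤ δ → ∀ s : ℕ, s ≤ L → L ≤ s + k → t (s+1) ≤ (1 - s / L) * t s + ε := by
  have hL' : (0 : ℝ) < L := by exact_mod_cast hL
  induction k with
  | zero =>
    intro ε hε
    refine ⟨ε, hε, fun t h0 h1 h2 h3 s hs hs' => ?_⟩
    obtain rfl : s = L := by omega
    rw [div_self hL'.ne']
    simpa using h3
  | succ k ih =>
    intro ε hε
    obtain ⟨δ, hδ, H⟩ := ih (min ε (ε^2)) (by positivity)
    refine ⟨δ, hδ, fun t h0 h1 h2 h3 s hs hs' => ?_⟩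
    have H' := H t h0 h1 h2 h3
    rcases Nat.lt_or_ge (s + k) L with hlt | hge
    · have hq := H' (s+1) (by omega) (by omega)
      have hq2 : t (s+2) ≤ (1 - (s+1) / L) * t (s+1) + ε^2 := by
        have := min_le_right ε (ε^2)
        push_cast at hq
        simp only [add_assoc] at hq ⊢
        norm_num at hq ⊢
        linarith
      have hsL : (s : ℝ) / L ≤ 1 := by
        rw [div_le_one hL']; exact_mod_cast hs
      have ha : 0 ≤ (1 - (s:ℝ)/L) * t s := mul_nonneg (by linarith) (h0 s)
      by_contra hcon
      push Not at hcon
      have hts := h2 s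
      have h5 : (s:ℝ) * t s * t (s+2) ≤ s * t s * ((1 - (s+1) / L) * t (s+1) + ε^2) :=
        mul_le_mul_of_nonneg_left hq2 (mul_nonneg (by positivity) (h0 s))
      have h6 : (s + 1 : ℝ) * t (s+1) ^ 2 ≤ (s+1) * ((1 - s / L) * t s * t (s+1)) + s * ε^2 := by
        have : s * t s * ((1 - (s+1) / L) * t (s+1) + ε^2) + t s * t (s+1)
          = (s+1) * ((1 - s / L) * t s * t (s+1)) + s * (t s * ε^2) := by
          field_simp; ring
        have h7 : (s:ℝ) * (t s * ε^2) ≤ s * ε^2 := by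
          apply mul_le_mul_of_nonneg_left _ (by positivity)
          have := h1 s
          nlinarith [sq_nonneg ε]
        linarith
      have h8 : t (s+1)^2 > (1 - s / L) * t s * t (s+1) + ε^2 := by
        nlinarith
      have : (0:ℝ) ≤ s := by positivity
      nlinarith [sq_nonneg ε]
    · have := H' s hs hge
      have := min_le_left ε (ε^2)
      linarith

lemma prod_eq (L r : ℕ) (hL : 1 ≤ L) (hr : r ≤ L) :
    ∏ s ∈ range r, (1 - (s:ℝ) / L) = (L.descFactorial r : ℝ) / (L:ℝ)^r := by
  have hL' : (0 : ℝ) < L := by exact_mod_cast hL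
  induction r with
  | zero => simp
  | succ r ih =>
    rw [prod_range_succ, ih (by omega), Nat.descFactorial_succ]
    push_cast [Nat.cast_sub (show r ≤ L by omega)]
    field_simp
    ring

lemma seq_final (L r : ℕ) (hL : 1 ≤ L) (hr : r ≤ L) : ∀ ε : ℝ, 0 < ε → ∃ δ : ℝ, 0 < δ ∧ ∀ t : ℕ → ℝ,
    (∀ s, 0 ≤ t s) → (∀ s, t s ≤ 1) →
    (∀ s : ℕ, (s + 1 : ℝ) * t (s+1) ^ 2 ≤ s * t s * t (s+2) + t s * t (s+1)) →
    t (L+1) ≤ δ → t r ≤ (L.descFactorial r : ℝ) / (L:ℝ)^r + ε := by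
  intro ε hε
  have hL' : (0 : ℝ) < L := by exact_mod_cast hL
  obtain ⟨δ, hδ, H⟩ := seq_lemma L hL L (ε / (r+1)) (by positivity)
  refine ⟨δ, hδ, fun t h0 h1 h2 h3 => ?_⟩
  have H' := H t h0 h1 h2 h3
  have key : ∀ q, q ≤ L → t q ≤ ∏ s ∈ range q, (1 - (s:ℝ) / L) + q * (ε / (r+1)) := by
    intro q
    induction q with
    | zero => intro _; simpa using h1 0
    | succ q ih =>
      intro hq
      have h4 := H' q (by omega) (by omega)
      have h5 := ih (by omega)
      have h6 : 0 ≤ 1 - (q:ℝ)/L := by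
        rw [sub_nonneg, div_le_one hL']; exact_mod_cast (by omega : q ≤ L)
      have h7 : (1 - (q:ℝ)/L) * (q * (ε / (r+1))) ≤ q * (ε/(r+1)) := by
        have : 0 ≤ (q:ℝ)/L := by positivity
        have : 0 ≤ q * (ε/(r+1)) := by positivity
        nlinarith
      rw [prod_range_succ]
      push_cast
      have h8 := mul_le_mul_of_nonneg_left h5 h6
      linarith
  have h9 := key r hr
  rw [prod_eq L r hL hr] at h9
  have : (r:ℝ) * (ε / (r+1)) ≤ ε := by
    rw [mul_div_assoc', div_le_iff₀ (by positivity)]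
    nlinarith
  linarith

lemma cN_le {V : Type*} [Fintype V] (Γ : SimpleGraph V) (s : ℕ) :
    cN Γ s ≤ Fintype.card V ^ s := by
  classical
  refine (card_filter_le _ _).trans ?_
  simp

lemma cN_final (L r : ℕ) (hL : 1 ≤ L) (hr : r ≤ L) (ε : ℝ) (hε : 0 < ε) : ∃ δ : ℝ, 0 < δ ∧
    ∀ n : ℕ, 0 < n → ∀ Γ : SimpleGraph (Fin n), (cN Γ (L+1) : ℝ) ≤ δ * (n:ℝ)^(L+1) →
     (cN Γ r : ℝ) ≤ ((L.descFactorial r : ℝ) / (L:ℝ)^r + ε) * (n:ℝ)^r := by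
  obtain ⟨δ, hδ, H⟩ := seq_final L r hL hr ε hε
  refine ⟨δ, hδ, fun n hn Γ h => ?_⟩
  have hn' : (0:ℝ) < n := by exact_mod_cast hn
  have := H (fun s => cN Γ s / (n:ℝ)^s) (fun s => by positivity) (fun s => by
    rw [div_le_one (by positivity)]
    exact_mod_cast (by simpa using cN_le Γ s)) (fun s => by
    have h := moon_moser Γ s
    rw [Fintype.card_fin] at h
    have h' : ((s:ℝ)+1) * (cN Γ (s+1):ℝ) ^ 2 ≤ cN Γ s * (s * cN Γ (s+2) + n * cN Γ (s+1)) := by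
      exact_mod_cast h
    have e1 : ((s:ℝ)+1) * ((cN Γ (s+1):ℝ) / (n:ℝ)^(s+1)) ^ 2 = ((s:ℝ)+1) * (cN Γ (s+1):ℝ) ^ 2 / (n:ℝ)^(2*s+2) := by
      rw [div_pow, ← pow_mul, mul_div_assoc]; ring_nf
    have e2 : (s:ℝ) * (cN Γ s / (n:ℝ)^s) * (cN Γ (s+2) / (n:ℝ)^(s+2)) + cN Γ s / (n:ℝ)^s * (cN Γ (s+1) / (n:ℝ)^(s+1)) = cN Γ s * (s * cN Γ (s+2) + n * cN Γ (s+1)) / (n:ℝ)^(2*s+2) := by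
      field_simp; ring
    rw [e1, e2]
    gcongr) (by
    rw [div_le_iff₀ (by positivity)]; exact h)
  rwa [div_le_iff₀ (by positivity)] at this


open scoped Classical in
lemma inj_count (n t : ℕ) :
    (univ.filter (fun z : Fin t → Fin n => Function.Injective z)).card = n.descFactorial t := by
  rw [← Fintype.card_subtype, Fintype.card_congr (Equiv.subtypeInjectiveEquivEmbedding _ _),
    Fintype.card_embedding_eq]
  simp

lemma tendsto_desc (t : ℕ) :
    Filter.Tendsto (fun n : ℕ => (n.descFactorial t : ℝ) / (n:ℝ)^t) Filter.atTop (nhds 1) := by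
  have h := isEquivalent_descFactorial t
  rw [Asymptotics.isEquivalent_iff_tendsto_one] at h
  · exact h
  · filter_upwards [Filter.eventually_gt_atTop 0] with n hn
    positivity

open scoped Classical in
lemma box_step {n l t : ℕ} (S : Finset (Fin (l+1) → Fin n)) (ε : ℝ) (hε : 0 < ε) (hn : 0 < n)
    (hS : ε * (n:ℝ)^(l+1) ≤ S.card)
    (hnd : 1 - ε^(t+1)/2 < (n.descFactorial (t+1) : ℝ) / (n:ℝ)^(t+1)) :
    ∃ z : Fin (t+1) → Fin n, Function.Injective z ∧
      ε^(t+1)/2 * (n:ℝ)^l ≤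
       (univ.filter (fun y : Fin l → Fin n => ∀ j, (Fin.cons (z j) y : Fin (l+1) → Fin n) ∈ S)).card := by
  have hn' : (0:ℝ) < n := by exact_mod_cast hn
  set d : (Fin l → Fin n) → ℕ := fun y =>
    (univ.filter (fun v : Fin n => (Fin.cons v y : Fin (l+1) → Fin n) ∈ S)).card with hd
  set c : (Fin (t+1) → Fin n) → ℕ := fun z =>
    (univ.filter (fun y : Fin l → Fin n => ∀ j, (Fin.cons (z j) y : Fin (l+1) → Fin n) ∈ S)).card with hc
  have h1 : ∑ y, d y = S.card := by
    have : S.card = ∑ x : Fin (l+1) → Fin n, if x ∈ S then 1 else 0 := by simp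
    rw [this, ← (Fin.consEquiv (fun _ => Fin n)).sum_comp, Fintype.sum_prod_type_right]
    refine sum_congr rfl fun y _ => ?_
    simp only [hd, card_filter]
    rfl
  have h2 : ∑ y, d y ^ (t+1) = ∑ z, c z := by
    simp only [hc, card_filter]
    rw [sum_comm]
    refine sum_congr rfl fun y _ => ?_
    rw [← card_filter]
    have : (univ.filter (fun z : Fin (t+1) → Fin n => ∀ j, (Fin.cons (z j) y : Fin (l+1) → Fin n) ∈ S))
      = Fintype.piFinset (fun _ : Fin (t+1) => univ.filter (fun v : Fin n => (Fin.cons v y : Fin (l+1) → Fin n) ∈ S)) := by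
      ext z; simp [Fintype.mem_piFinset]
    rw [this, Fintype.card_piFinset]
    simp [hd]
  have h3 : ε^(t+1) * (n:ℝ)^(l+(t+1)) ≤ ∑ z, (c z : ℝ) := by
    have h4 := pow_sum_div_card_le_sum_pow (s := (univ : Finset (Fin l → Fin n)))
      (f := fun y => (d y : ℝ)) (fun _ _ => by positivity) t
    have h5 : ∑ y, (d y : ℝ) = S.card := by exact_mod_cast h1
    have h6 : ∑ y, (d y : ℝ)^(t+1) = ∑ z, (c z : ℝ) := by exact_mod_cast h2
    rw [h5, h6] at h4
    refine le_trans ?_ h4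
    have hcard : (#(univ : Finset (Fin l → Fin n)) : ℝ) = (n:ℝ)^l := by simp
    rw [hcard, le_div_iff₀ (by positivity)]
    calc _ = (ε * (n:ℝ)^(l+1))^(t+1) := by ring
      _ ≤ _ := by gcongr
  by_contra hcon
  push Not at hcon
  have hcn : ∀ z, (c z : ℝ) ≤ (n:ℝ)^l := by
    intro z
    have : c z ≤ n^l := (card_filter_le _ _).trans (by simp)
    exact_mod_cast this
  have h7 : ∑ z, (c z : ℝ) ≤ ∑ z : Fin (t+1) → Fin n,
      (ε^(t+1)/2 * (n:ℝ)^l + (1 - if Function.Injective z then 1 else 0) * (n:ℝ)^l) := by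
    refine sum_le_sum fun z _ => ?_
    split_ifs with hz
    · have := hcon z hz
      linarith
    · have := hcn z
      have : 0 ≤ ε^(t+1)/2 * (n:ℝ)^l := by positivity
      linarith
  have h8 : ∑ z : Fin (t+1) → Fin n, (if Function.Injective z then (1:ℝ) else 0) = n.descFactorial (t+1) := by
    rw [← inj_count n (t+1), card_filter]; push_cast; rfl
  rw [sum_add_distrib, ← sum_mul, ← sum_mul, sum_sub_distrib, h8] at h7
  simp only [sum_const, card_univ, Fintype.card_pi, Fintype.card_fin, prod_const, nsmul_eq_mul, mul_one] at h7
  push_cast at h7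
  rw [lt_div_iff₀ (by positivity)] at hnd
  have h9 : 0 < (n:ℝ)^l := by positivity
  have h10 := mul_lt_mul_of_pos_right hnd h9
  rw [pow_add (n:ℝ) l] at h3
  nlinarith

lemma box (t : ℕ) (l : ℕ) : ∀ ε : ℝ, 0 < ε → ∃ n0 : ℕ, ∀ n ≥ n0, ∀ S : Finset (Fin l → Fin n),
    ε * (n:ℝ)^l ≤ S.card → ∃ g : Fin l → Fin (t+1) → Fin n, (∀ i, Function.Injective (g i)) ∧
      ∀ j : Fin l → Fin (t+1), (fun i => g i (j i)) ∈ S := by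
  classical
  induction l with
  | zero =>
    intro ε hε
    refine ⟨0, fun n _ S hS => ⟨fun i => i.elim0, fun i => i.elim0, fun j => ?_⟩⟩
    have : 0 < S.card := by
      have : (0:ℝ) < S.card := by
        simp only [pow_zero, mul_one] at hS; linarith
      exact_mod_cast this
    obtain ⟨x, hx⟩ := card_pos.1 this
    convert hx
  | succ l ih =>
    intro ε hε
    obtain ⟨n0, h0⟩ := ih (ε^(t+1)/2) (by positivity)
    have h1 := (tendsto_desc (t+1)).eventually_const_lt
      (show 1 - ε^(t+1)/2 < 1 by have : 0 < ε^(t+1) := by positivity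
                                 linarith)
    obtain ⟨n1, h1⟩ := Filter.eventually_atTop.1 h1
    refine ⟨max (max n0 n1) 1, fun n hn S hS => ?_⟩
    obtain ⟨z, hz, hz'⟩ := box_step (t := t) S ε hε (by omega) hS (h1 n (by omega))
    obtain ⟨g, hg, hg'⟩ := h0 n (by omega) _ hz'
    refine ⟨Fin.cons z g, fun i => ?_, fun j => ?_⟩
    · refine Fin.cases ?_ (fun i => ?_) i
      · simpa using hz
      · simpa using hg i
    · have := hg' (fun i => j i.succ)
      simp only [mem_filter, mem_univ, true_and] at this
      convert this (j 0) using 1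
      ext i
      refine Fin.cases ?_ (fun i => ?_) i
      · simp
      · simp

/-- `F`-free graphs have few `l`-cliques -/
lemma few_cliques {α : Type*} [Fintype α] (F : SimpleGraph α) (l : ℕ) (hF : F.Colorable l)
    (ε : ℝ) (hε : 0 < ε) : ∃ n0 : ℕ, ∀ n ≥ n0, ∀ Γ : SimpleGraph (Fin n),
    (¬ ∃ f : α → Fin n, Function.Injective f ∧ ∀ u v, F.Adj u v → Γ.Adj (f u) (f v)) →
    (cN Γ l : ℝ) ≤ ε * (n:ℝ)^l := by
  classical
  obtain ⟨n0, h0⟩ := box (Fintype.card α) l ε hε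
  refine ⟨n0, fun n hn Γ hΓ => ?_⟩
  by_contra hcon
  push Not at hcon
  obtain ⟨g, hg, hg'⟩ := h0 n hn _ hcon.le
  obtain ⟨c⟩ := hF
  let e : α → Fin (Fintype.card α + 1) := fun a => (Fintype.equivFin α a).castSucc
  have he : Function.Injective e := fun a b h => by
    simpa [e] using h
  have key : ∀ u v, c u ≠ c v → Γ.Adj (g (c u) (e u)) (g (c v) (e v)) := by
    intro u v huv
    have := hg' (fun i => if i = c u then e u else e v)
    simp only [mem_filter, mem_univ, true_and] at this
    have h2 := this (c u) (c v) huv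
    simpa [huv.symm] using h2
  refine hΓ ⟨fun a => g (c a) (e a), fun a b hab => ?_, fun u v huv => key u v (c.valid huv)⟩
  by_cases h : c a = c b
  · simp only [h] at hab
    exact he (hg _ hab)
  · exact absurd hab (key a b h).ne


/-- heavy pairs -/
def Heavy {V : Type*} [DecidableEq V] (G : Finset (Finset V)) (M : ℕ) (u v : V) : Prop :=
  ∀ S : Finset V, S.card ≤ M → ∃ e ∈ G, u ∈ e ∧ v ∈ e ∧ Disjoint (e \ {u, v}) S

/-- the graph of heavy pairs -/
def heavyGraph {V : Type*} [DecidableEq V] (G : Finset (Finset V)) (M : ℕ) : SimpleGraph V where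
  Adj u v := u ≠ v ∧ Heavy G M u v
  symm := ⟨by
    rintro u v ⟨h1, h2⟩
    refine ⟨h1.symm, fun S hS => ?_⟩
    obtain ⟨e, he, hu, hv, hd⟩ := h2 S hS
    exact ⟨e, he, hv, hu, by rwa [pair_comm]⟩⟩
  loopless := ⟨fun u h => h.1 rfl⟩

lemma card_supersets {n r : ℕ} (A : Finset (Fin n)) (hA : A.card = 3) :
    ((univ.powersetCard r).filter (fun e => A ⊆ e)).card * n^3 ≤ n^r := by
  rcases Nat.lt_or_ge r 3 with h | h
  · rw [filter_eq_empty_iff.2]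
    · simp
    · intro e he hAe
      have := card_le_card hAe
      rw [mem_powersetCard] at he
      omega
  · have : ((univ.powersetCard r).filter (fun e => A ⊆ e)).card ≤
        ((univ : Finset (Fin n)).powersetCard (r-3)).card := by
      apply card_le_card_of_injOn (fun e => e \ A)
      · intro e he
        simp only [coe_filter, mem_powersetCard, Set.mem_ofPred_eq] at he
        simp only [mem_coe, mem_powersetCard]
        refine ⟨subset_univ _, ?_⟩
        rw [card_sdiff_of_subset he.2, he.1.2, hA]
      · intro e he e' he' hee
        simp only [coe_filter, mem_powersetCard, Set.mem_ofPred_eq] at he he'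
        simp only at hee
        rw [← sdiff_union_of_subset he.2, hee, sdiff_union_of_subset he'.2]
    rw [card_powersetCard, card_univ, Fintype.card_fin] at this
    calc _ ≤ n^(r-3) * n^3 := by
          gcongr
          exact this.trans (Nat.choose_le_pow _ _)
      _ = n^r := by rw [← pow_add]; congr 1; omega

open scoped Classical in
lemma bad_edges {n r M : ℕ} (G : Finset (Finset (Fin n))) (hG : IsRGraph r G) :
    (G.filter (fun e => ¬ ∀ u ∈ e, ∀ v ∈ e, u ≠ v → (heavyGraph G M).Adj u v)).card * n
      ≤ M * n^r := by
  -- choose light sets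
  have hS : ∀ p : Fin n × Fin n, ∃ S : Finset (Fin n), S.card ≤ M ∧
      (¬ Heavy G M p.1 p.2 → ∀ e ∈ G, p.1 ∈ e → p.2 ∈ e → ¬ Disjoint (e \ {p.1, p.2}) S) := by
    intro p
    by_cases h : Heavy G M p.1 p.2
    · exact ⟨∅, by simp, fun h' => absurd h h'⟩
    · unfold Heavy at h
      push Not at h
      obtain ⟨S, hS, h⟩ := h
      exact ⟨S, hS, fun _ => h⟩
  choose S hS1 hS2 using hS
  set T : Finset ((_ : Fin n × Fin n) × Fin n) :=
    ((univ : Finset (Fin n × Fin n)).sigma S).filter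
      (fun q => ({q.1.1, q.1.2, q.2} : Finset (Fin n)).card = 3) with hT
  have hTc : T.card ≤ n^2 * M := by
    refine (card_filter_le _ _).trans ?_
    rw [card_sigma]
    calc _ ≤ ∑ p : Fin n × Fin n, M := sum_le_sum fun p _ => hS1 p
      _ = _ := by simp [sq]
  have hsub : G.filter (fun e => ¬ ∀ u ∈ e, ∀ v ∈ e, u ≠ v → (heavyGraph G M).Adj u v) ⊆
      T.biUnion (fun q => (univ.powersetCard r).filter (fun e => ({q.1.1, q.1.2, q.2} : Finset (Fin n)) ⊆ e)) := by
    intro e he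
    rw [mem_filter] at he
    obtain ⟨heG, he⟩ := he
    push Not at he
    obtain ⟨u, hu, v, hv, huv, hadj⟩ := he
    have hnh : ¬ Heavy G M u v := fun h => hadj ⟨huv, h⟩
    have := hS2 (u, v) hnh e heG hu hv
    rw [not_disjoint_iff] at this
    obtain ⟨s, hs1, hs2⟩ := this
    simp only [mem_sdiff, mem_insert, mem_singleton, not_or] at hs1
    rw [mem_biUnion]
    refine ⟨⟨(u, v), s⟩, ?_, ?_⟩
    · rw [hT, mem_filter, mem_sigma]
      refine ⟨⟨mem_univ _, hs2⟩, ?_⟩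
      exact card_eq_three.2 ⟨u, v, s, huv, Ne.symm hs1.2.1, Ne.symm hs1.2.2, rfl⟩
    · rw [mem_filter, mem_powersetCard]
      refine ⟨⟨subset_univ _, hG e heG⟩, ?_⟩
      intro x hx
      simp only [mem_insert, mem_singleton] at hx
      rcases hx with rfl | rfl | rfl
      exacts [hu, hv, hs1.1]
  rcases Nat.eq_zero_or_pos n with rfl | hn
  · simp
  have h1 := (card_le_card hsub).trans card_biUnion_le
  have h2 : (∑ q ∈ T, ((univ.powersetCard r).filter (fun e => ({q.1.1, q.1.2, q.2} : Finset (Fin n)) ⊆ e)).card) * n^3 ≤ T.card * n^r := by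
    rw [sum_mul, ← smul_eq_mul (T.card), ← sum_const]
    refine sum_le_sum fun q hq => ?_
    rw [hT, mem_filter] at hq
    exact card_supersets _ hq.2
  have h3 : (G.filter (fun e => ¬ ∀ u ∈ e, ∀ v ∈ e, u ≠ v → (heavyGraph G M).Adj u v)).card * n^3 ≤ n^2 * M * n^r :=
    (Nat.mul_le_mul_right _ h1).trans (h2.trans (Nat.mul_le_mul_right _ hTc))
  have h4 : 0 < n^2 := by positivity
  refine Nat.le_of_mul_le_mul_left ?_ h4
  calc _ = (G.filter (fun e => ¬ ∀ u ∈ e, ∀ v ∈ e, u ≠ v → (heavyGraph G M).Adj u v)).card * n^3 := by ring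
    _ ≤ _ := h3
    _ = _ := by ring

open scoped Classical in
lemma card_cliques {n r : ℕ} (Γ : SimpleGraph (Fin n)) (C : Finset (Finset (Fin n)))
    (hC : IsRGraph r C) (h : ∀ e ∈ C, ∀ u ∈ e, ∀ v ∈ e, u ≠ v → Γ.Adj u v) :
    r.factorial * C.card ≤ cN Γ r := by
  have : r.factorial * C.card = (C.attach ×ˢ (univ : Finset (Equiv.Perm (Fin r)))).card := by
    rw [card_product, card_attach, card_univ, Fintype.card_perm, Fintype.card_fin, mul_comm]
  rw [this]
  have hm : ∀ (e : {e // e ∈ C}) (i : Fin r), e.1.orderEmbOfFin (hC e.1 e.2) i ∈ e.1 :=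
    fun e i => orderEmbOfFin_mem _ _ _
  apply card_le_card_of_injOn
    (fun q => fun i => q.1.1.orderEmbOfFin (hC q.1.1 q.1.2) (q.2 i))
  · rintro ⟨e, σ⟩ -
    simp only [coe_filter, mem_univ, true_and, Set.mem_ofPred_eq]
    intro i j hij
    exact h e.1 e.2 _ (hm _ _) _ (hm _ _) (by simpa using hij)
  · rintro ⟨e, σ⟩ - ⟨e', σ'⟩ - hq
    simp only at hq
    have hr : ∀ (e : {e // e ∈ C}) (σ : Equiv.Perm (Fin r)),
        Set.range (fun i => e.1.orderEmbOfFin (hC e.1 e.2) (σ i)) = (e.1 : Set (Fin n)) := by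
      intro e σ
      rw [← range_orderEmbOfFin e.1 (hC e.1 e.2)]
      exact σ.surjective.range_comp _
    have hee : e = e' := by
      apply Subtype.ext
      apply coe_injective
      rw [← hr e σ, ← hr e' σ', hq]
    subst hee
    congr 1
    ext i
    have := congrFun hq i
    have := (e.1.orderEmbOfFin (hC e.1 e.2)).injective this
    rw [this]

/-- greedy extension -/
lemma greedy {α V : Type*} [Fintype α] [DecidableEq α] [DecidableEq V] (r : ℕ)
    (F : SimpleGraph α) [DecidableRel F.Adj] (G : Finset (Finset V)) (hG : IsRGraph r G)
    (f : α → V) (hf : Function.Injective f)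
    (hadj : ∀ u v, F.Adj u v →
      (heavyGraph G (Fintype.card α + F.edgeFinset.card * r)).Adj (f u) (f v))
    (D : Finset F.edgeFinset) :
    ∃ R : F.edgeFinset → Finset V, (∀ e, (R e).card ≤ r) ∧ (∀ e ∈ D, (R e).card = r - 2 ∧
      Disjoint (R e) (univ.image f) ∧ (sym2ToFinset e.1).image f ∪ R e ∈ G) ∧
      ∀ e ∈ D, ∀ e' ∈ D, e ≠ e' → Disjoint (R e) (R e') := by
  induction D using Finset.induction_on with
  | empty => exact ⟨fun _ => ∅, by simp, by simp, by simp⟩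
  | insert a D ha ih =>
    obtain ⟨R, hR1, hR2, hR3⟩ := ih
    obtain ⟨⟨a, haE⟩, rfl⟩ : ∃ b, b = a := ⟨a, rfl⟩
    induction a using Sym2.ind with
    | _ u v =>
    have huv : F.Adj u v := by simpa using haE
    obtain ⟨hne, hh⟩ := hadj u v huv
    obtain ⟨e, heG, hu, hv, hd⟩ := hh (univ.image f ∪ D.biUnion R) (by
      refine (card_union_le _ _).trans (add_le_add card_image_le ?_)
      refine card_biUnion_le.trans ?_
      calc _ ≤ ∑ _e ∈ D, r := sum_le_sum fun e _ => hR1 e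
        _ = D.card * r := by simp
        _ ≤ _ := by
          gcongr
          exact (card_le_univ D).trans (Fintype.card_coe _).le)
    rw [disjoint_union_right] at hd
    have him : (sym2ToFinset s(u, v)).image f = {f u, f v} := by
      have : sym2ToFinset s(u, v) = {u, v} := by
        ext x; simp [sym2ToFinset]
      rw [this]; simp [image_insert]
    have hsub : ({f u, f v} : Finset V) ⊆ e := by
      intro x hx
      simp only [mem_insert, mem_singleton] at hx
      rcases hx with rfl | rfl <;> assumption
    have hec := hG e heG
    have hcard : (e \ {f u, f v}).card = r - 2 := by
      rw [card_sdiff_of_subset hsub, hec, card_pair hne]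
    refine ⟨Function.update R ⟨s(u,v), haE⟩ (e \ {f u, f v}), fun b => ?_, fun b hb => ?_, ?_⟩
    · by_cases hba : b = ⟨s(u,v), haE⟩
      · subst hba; simp only [Function.update_self]; omega
      · rw [Function.update_of_ne hba]; exact hR1 b
    · by_cases hba : b = ⟨s(u,v), haE⟩
      · subst hba; simp only [Function.update_self]
        refine ⟨hcard, hd.1, ?_⟩
        rw [him, union_sdiff_of_subset hsub]; exact heG
      · rw [Function.update_of_ne hba]; exact hR2 b (mem_of_mem_insert_of_ne hb hba)
    · have hnew : ∀ b ∈ D, Disjoint (e \ {f u, f v}) (R b) := fun b hb =>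
        hd.2.mono_right (subset_biUnion_of_mem R hb)
      intro b hb b' hb' hbb
      by_cases hba : b = ⟨s(u,v), haE⟩
      · subst hba
        have hb'D := mem_of_mem_insert_of_ne hb' (Ne.symm hbb)
        rw [Function.update_self, Function.update_of_ne (Ne.symm hbb)]
        exact hnew b' hb'D
      · have hbD := mem_of_mem_insert_of_ne hb hba
        rw [Function.update_of_ne hba]
        by_cases hba' : b' = ⟨s(u,v), haE⟩
        · subst hba'
          rw [Function.update_self]
          exact (hnew b hbD).symm
        · rw [Function.update_of_ne hba']
          exact hR3 b hbD b' (mem_of_mem_insert_of_ne hb' hba') hbb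

lemma copy_of_heavy {α V : Type*} [Fintype α] [DecidableEq α] [DecidableEq V] (r : ℕ)
    (F : SimpleGraph α) [DecidableRel F.Adj] (G : Finset (Finset V)) (hG : IsRGraph r G)
    (f : α → V) (hf : Function.Injective f)
    (hadj : ∀ u v, F.Adj u v →
      (heavyGraph G (Fintype.card α + F.edgeFinset.card * r)).Adj (f u) (f v)) :
    ContainsCopy (expansion r F) G := by
  obtain ⟨R, -, hR2, hR3⟩ := greedy r F G hG f hf hadj univ
  have hc : ∀ e, (R e).card = r - 2 := fun e => (hR2 e (mem_univ _)).1
  let h : ∀ e, Fin (r-2) ≃ R e := fun e => ((R e).equivFinOfCardEq (hc e)).symm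
  refine ⟨Sum.elim f (fun p => (h p.1 p.2 : V)), ?_, ?_⟩
  · refine hf.sumElim ?_ ?_
    · rintro ⟨e, i⟩ ⟨e', i'⟩ hee
      simp only at hee
      have : e = e' := by
        by_contra hne
        exact disjoint_left.1 (hR3 e (mem_univ _) e' (mem_univ _) hne) (h e i).2 (hee ▸ (h e' i').2)
      subst this
      have := (h e).injective (Subtype.ext hee)
      rw [this]
    · rintro a ⟨e, i⟩ hae
      exact disjoint_left.1 (hR2 e (mem_univ _)).2.1 (h e i).2
        (by rw [← hae]; exact mem_image_of_mem _ (mem_univ _))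
  · intro E hE
    rw [expansion, mem_image] at hE
    obtain ⟨e, -, rfl⟩ := hE
    convert (hR2 e (mem_univ _)).2.2 using 1
    rw [image_union, image_image, image_image]
    congr 1
    ext x
    simp only [mem_image, mem_univ, true_and, Function.comp, Sum.elim_inr]
    constructor
    · rintro ⟨i, rfl⟩; exact (h e i).2
    · intro hx
      exact ⟨(h e).symm ⟨x, hx⟩, by simp⟩

lemma upper {α : Type*} [Fintype α] [DecidableEq α]
    (r L : ℕ) (hL : 1 ≤ L) (hrl : r ≤ L)
    (F : SimpleGraph α) [DecidableRel F.Adj] (hF : F.Colorable (L+1)) (ε : ℝ) (hε : 0 < ε) :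
    ∃ n0 : ℕ, ∀ n ≥ n0, ∀ G : Finset (Finset (Fin n)), IsRGraph r G →
      ¬ ContainsCopy (expansion r F) G →
      (r.factorial : ℝ) * G.card ≤ ((L.descFactorial r : ℝ) / (L:ℝ)^r + ε) * (n:ℝ)^r := by
  classical
  obtain ⟨δ, hδ, H⟩ := cN_final L r hL hrl (ε/2) (by positivity)
  obtain ⟨n0, h0⟩ := few_cliques F (L+1) hF δ hδ
  set M := Fintype.card α + F.edgeFinset.card * r with hM
  obtain ⟨n1, h1⟩ := exists_nat_gt (r.factorial * M / (ε/2))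
  refine ⟨max (max n0 n1) 1, fun n hn G hG hfree => ?_⟩
  have hn' : (0:ℝ) < n := by exact_mod_cast (by omega : 0 < n)
  have hA := h0 n (by omega) (heavyGraph G M) (by
    rintro ⟨f, hf, hadj⟩
    exact hfree (copy_of_heavy r F G hG f hf hadj))
  have hB := H n (by omega) _ hA
  have hC := bad_edges (M := M) G hG
  have hD := card_cliques (heavyGraph G M)
    (G.filter (fun e => ∀ u ∈ e, ∀ v ∈ e, u ≠ v → (heavyGraph G M).Adj u v))
    (fun e he => hG e (mem_filter.1 he).1) (fun e he => (mem_filter.1 he).2)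
  have hE := card_filter_add_card_filter_not (s := G) (fun e => ∀ u ∈ e, ∀ v ∈ e, u ≠ v → (heavyGraph G M).Adj u v)
  set g1 := #(G.filter (fun e => ∀ u ∈ e, ∀ v ∈ e, u ≠ v → (heavyGraph G M).Adj u v))
  set g2 := #(G.filter (fun e => ¬ ∀ u ∈ e, ∀ v ∈ e, u ≠ v → (heavyGraph G M).Adj u v))
  have hE' : (G.card : ℝ) = g1 + g2 := by exact_mod_cast hE.symm
  have hC' : (g2 : ℝ) * n ≤ M * (n:ℝ)^r := by exact_mod_cast hC
  have hD' : (r.factorial : ℝ) * g1 ≤ cN (heavyGraph G M) r := by exact_mod_cast hD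
  have hF' : (r.factorial : ℝ) * g2 ≤ ε/2 * (n:ℝ)^r := by
    have h2 : (r.factorial : ℝ) * M ≤ ε/2 * n := by
      rw [div_lt_iff₀ (by positivity)] at h1
      have : (n1:ℝ) ≤ n := by exact_mod_cast (by omega : n1 ≤ n)
      nlinarith
    have h3 : (r.factorial : ℝ) * g2 * n ≤ ε/2 * (n:ℝ)^r * n := by
      calc (r.factorial : ℝ) * g2 * n = r.factorial * (g2 * n) := by ring
        _ ≤ r.factorial * (M * (n:ℝ)^r) := by gcongr
        _ = (r.factorial * M) * (n:ℝ)^r := by ring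
        _ ≤ (ε/2 * n) * (n:ℝ)^r := by gcongr
        _ = _ := by ring
    exact le_of_mul_le_mul_right h3 hn'
  rw [hE']
  linarith


lemma turan_free {α : Type*} [Fintype α] [DecidableEq α]
    (r L : ℕ) (hL : 1 ≤ L) (F : SimpleGraph α) [DecidableRel F.Adj] (hF : ¬ F.Colorable L) (n : ℕ) :
    ¬ ContainsCopy (expansion r F) (turanGraph r n L) := by
  rintro ⟨f, hf, h⟩
  apply hF
  refine ⟨SimpleGraph.Coloring.mk (fun a => (⟨(f (Sum.inl a) : ℕ) % L, Nat.mod_lt _ hL⟩ : Fin L)) ?_⟩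
  intro u v huv heq
  have hmem : s(u, v) ∈ F.edgeFinset := by simpa using huv
  have hE := h _ (mem_image.2 ⟨⟨s(u,v), hmem⟩, mem_attach _ _, rfl⟩)
  rw [turanGraph, mem_filter] at hE
  have := hE.2 (f (Sum.inl u)) (mem_image_of_mem _ (mem_union_left _ (mem_image_of_mem _ (by simp [sym2ToFinset]))))
    (f (Sum.inl v)) (mem_image_of_mem _ (mem_union_left _ (mem_image_of_mem _ (by simp [sym2ToFinset]))))
    (by simpa using heq)
  have h2 := hf this
  simp only [Sum.inl.injEq] at h2
  exact huv.ne h2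

lemma turan_count (r L n : ℕ) (hL : 1 ≤ L) :
    L.choose r * (n / L)^r ≤ (turanGraph r n L).card := by
  set q := n / L with hq
  have hlt : ∀ (a : Fin L) (b : Fin q), (b:ℕ) * L + a < n := by
    intro a b
    have h1 : (b:ℕ) + 1 ≤ q := b.2
    have h2 : q * L ≤ n := Nat.div_mul_le_self n L
    have h3 := Nat.mul_le_mul_right L h1
    have := a.2
    rw [add_mul] at h3
    omega
  let φ : Fin L → Fin q → Fin n := fun a b => ⟨b * L + a, hlt a b⟩
  have hφ : ∀ a b, (φ a b : ℕ) % L = a := by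
    intro a b
    simp [φ, Nat.mod_eq_of_lt a.2]
  have hφ2 : ∀ a b b', φ a b = φ a b' → b = b' := by
    intro a b b' h
    have : (b:ℕ) * L + a = b' * L + a := congrArg Fin.val h
    have h2 : (b:ℕ) * L = b' * L := by omega
    exact Fin.ext (Nat.eq_of_mul_eq_mul_right hL h2)
  have hcard : L.choose r * q^r = (((univ : Finset (Fin L)).powersetCard r).sigma
      (fun A => A.pi (fun _ => (univ : Finset (Fin q))))).card := by
    rw [card_sigma]
    have : ∀ A ∈ (univ : Finset (Fin L)).powersetCard r,
        (A.pi (fun _ => (univ : Finset (Fin q)))).card = q^r := by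
      intro A hA
      rw [mem_powersetCard] at hA
      rw [card_pi, prod_const, hA.2, card_univ, Fintype.card_fin]
    rw [sum_congr rfl this, sum_const, card_powersetCard, card_univ, Fintype.card_fin, smul_eq_mul]
  rw [hcard]
  apply card_le_card_of_injOn
    (fun p => p.1.attach.image (fun a => φ a.1 (p.2 a.1 a.2)))
  · rintro ⟨A, p⟩ hA
    simp only [mem_coe, mem_sigma, mem_powersetCard] at hA
    simp only [mem_coe, turanGraph, mem_filter, mem_powersetCard]
    refine ⟨⟨subset_univ _, ?_⟩, ?_⟩
    · rw [card_image_of_injective, card_attach, hA.1.2]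
      intro a b hab
      have := congrArg (fun x : Fin n => (x:ℕ) % L) hab
      simp only [hφ] at this
      exact Subtype.ext (Fin.ext this)
    · intro u hu v hv huv
      simp only [mem_image, mem_attach, true_and] at hu hv
      obtain ⟨a, rfl⟩ := hu
      obtain ⟨b, rfl⟩ := hv
      rw [hφ, hφ] at huv
      have : a = b := Subtype.ext (Fin.ext huv)
      rw [this]
  · rintro ⟨A, p⟩ hA ⟨B, p'⟩ hB hAB
    simp only at hAB
    have hsub : ∀ (A B : Finset (Fin L)) (p : ∀ a ∈ A, Fin q) (p' : ∀ a ∈ B, Fin q),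
        A.attach.image (fun a => φ a.1 (p a.1 a.2)) = B.attach.image (fun a => φ a.1 (p' a.1 a.2)) →
        ∀ a (ha : a ∈ A), ∃ hb : a ∈ B, p a ha = p' a hb := by
      intro A B p p' h a ha
      have : φ a (p a ha) ∈ B.attach.image (fun a => φ a.1 (p' a.1 a.2)) := by
        rw [← h]
        exact mem_image.2 ⟨⟨a, ha⟩, mem_attach _ _, rfl⟩
      simp only [mem_image, mem_attach, true_and] at this
      obtain ⟨⟨b, hb⟩, hb'⟩ := this
      have h2 := congrArg (fun x : Fin n => (x:ℕ) % L) hb'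
      simp only [hφ] at h2
      obtain rfl : b = a := Fin.ext h2
      exact ⟨hb, (hφ2 _ _ _ hb').symm⟩
    obtain rfl : A = B := by
      ext a
      exact ⟨fun h => (hsub A B p p' hAB a h).1, fun h => (hsub B A p' p hAB.symm a h).1⟩
    congr 1
    funext a ha
    exact (hsub A A p p' hAB a ha).2

lemma exNum_bdd {α : Type*} (r n : ℕ) (H : Finset (Finset α)) :
    BddAbove {m | ∃ G : Finset (Finset (Fin n)), IsRGraph r G ∧ ¬ ContainsCopy H G ∧ G.card = m} := by
  refine ⟨Fintype.card (Finset (Fin n)), ?_⟩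
  rintro m ⟨G, -, -, rfl⟩
  exact card_le_univ G

lemma tendsto_div (L : ℕ) :
    Filter.Tendsto (fun n : ℕ => ((n / L : ℕ) : ℝ) / n) Filter.atTop (nhds (1 / (L:ℝ))) := by
  have h := (tendsto_nat_floor_mul_div_atTop (R := ℝ) (a := 1 / (L:ℝ)) (by positivity)).comp
    tendsto_natCast_atTop_atTop
  refine h.congr fun n => ?_
  simp only [Function.comp]
  congr 2
  rw [one_div_mul_eq_div, Nat.floor_div_eq_div]

lemma tendsto_choose (r : ℕ) :
    Filter.Tendsto (fun n : ℕ => (n:ℝ)^r / (n.choose r : ℝ)) Filter.atTop (nhds (r.factorial : ℝ)) := by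
  have h := ((tendsto_desc r).inv₀ one_ne_zero).const_mul (r.factorial : ℝ)
  rw [inv_one, mul_one] at h
  refine h.congr' ?_
  filter_upwards [Filter.eventually_ge_atTop r] with n hn
  rw [Nat.descFactorial_eq_factorial_mul_choose]
  push_cast
  have h1 : (0:ℝ) < n.choose r := by exact_mod_cast Nat.choose_pos hn
  have h2 : (0:ℝ) < r.factorial := by exact_mod_cast r.factorial_pos
  rw [inv_div]
  field_simp

end TDE

/-- **Theorem (Turán density of expansions).**  Let `ℓ > r ≥ 2` and let `F` be a 2-graph with
`χ(F) = ℓ`.  Then `ex(n, H_F^(r)) / C(n,r) → (r!/(ℓ-1)^r)·C(ℓ-1, r)` as `n → ∞`. -/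
theorem turan_density_expansion {α : Type*} [Fintype α] [DecidableEq α]
    (r ℓ : ℕ) (hr : 2 ≤ r) (hrl : r < ℓ)
    (F : SimpleGraph α) [DecidableRel F.Adj] (hχ : F.chromaticNumber = (ℓ : ℕ∞)) :
    Filter.Tendsto (fun n => (exNum r n (expansion r F) : ℝ) / (n.choose r))
      Filter.atTop
      (nhds ((r.factorial : ℝ) / ((ℓ - 1 : ℕ) : ℝ) ^ r * ((ℓ - 1).choose r : ℝ))) := by
  obtain ⟨L, rfl⟩ : ∃ L, ℓ = L + 1 := ⟨ℓ - 1, by omega⟩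
  simp only [Nat.add_sub_cancel]
  have hL : 1 ≤ L := by omega
  have hrL : r ≤ L := by omega
  have hL' : (0:ℝ) < L := by exact_mod_cast hL
  have hcol : F.Colorable (L+1) := by
    rw [← SimpleGraph.chromaticNumber_le_iff_colorable, hχ]
  have hncol : ¬ F.Colorable L := by
    rw [← SimpleGraph.chromaticNumber_le_iff_colorable, hχ]
    exact_mod_cast (by omega : ¬ (L + 1 ≤ L))
  have hfact : (0:ℝ) < r.factorial := by exact_mod_cast r.factorial_pos
  have hmem : ∀ n, turanNum r n L ∈ {m | ∃ G : Finset (Finset (Fin n)), IsRGraph r G ∧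
      ¬ ContainsCopy (expansion r F) G ∧ G.card = m} := fun n =>
    ⟨turanGraph r n L, fun e he => (mem_powersetCard.1 (mem_filter.1 he).1).2,
      TDE.turan_free r L hL F hncol n, rfl⟩
  have hlow : ∀ n, L.choose r * (n / L)^r ≤ exNum r n (expansion r F) := fun n =>
    (TDE.turan_count r L n hL).trans (le_csSup (TDE.exNum_bdd _ _ _) (hmem n))
  have hdens : Filter.Tendsto (fun n : ℕ => (exNum r n (expansion r F) : ℝ) / (n:ℝ)^r)
      Filter.atTop (nhds ((L.choose r : ℝ) / (L:ℝ)^r)) := by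
    have hlim : Filter.Tendsto (fun n : ℕ => (L.choose r : ℝ) * (((n / L : ℕ) : ℝ) / n)^r)
        Filter.atTop (nhds ((L.choose r : ℝ) / (L:ℝ)^r)) := by
      have := ((TDE.tendsto_div L).pow r).const_mul (L.choose r : ℝ)
      simpa [div_eq_mul_inv] using this
    rw [tendsto_order]
    constructor
    · intro a ha
      filter_upwards [hlim.eventually_const_lt ha, Filter.eventually_gt_atTop 0] with n hn hn0
      have hn0' : (0:ℝ) < n := by exact_mod_cast hn0
      refine lt_of_lt_of_le hn ?_
      rw [div_pow, ← mul_div_assoc]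
      gcongr
      exact_mod_cast hlow n
    · intro a ha
      set ε := (a - (L.choose r : ℝ) / (L:ℝ)^r) / 2 * r.factorial with hε
      have hε0 : 0 < ε := by
        have : 0 < a - (L.choose r : ℝ) / (L:ℝ)^r := by linarith
        positivity
      obtain ⟨n0, H⟩ := TDE.upper r L hL hrL F hcol ε hε0
      filter_upwards [Filter.eventually_ge_atTop n0, Filter.eventually_gt_atTop 0] with n hn hn0
      have hn0' : (0:ℝ) < n := by exact_mod_cast hn0
      obtain ⟨G, hG, hfree, hcard⟩ := Nat.sSup_mem ⟨_, hmem n⟩ (TDE.exNum_bdd r n (expansion r F))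
      have h1 := H n hn G hG hfree
      rw [hcard] at h1
      change (r.factorial : ℝ) * (exNum r n (expansion r F) : ℝ) ≤ _ at h1
      rw [div_lt_iff₀ (by positivity)]
      rw [Nat.descFactorial_eq_factorial_mul_choose] at h1
      push_cast at h1
      have h2 : (r.factorial : ℝ) * (exNum r n (expansion r F) : ℝ) < r.factorial * (a * (n:ℝ)^r) := by
        refine lt_of_le_of_lt h1 ?_
        have h3 : (r.factorial : ℝ) * L.choose r / (L:ℝ)^r + ε < r.factorial * a := by
          rw [hε, mul_div_assoc]
          nlinarith
        have := mul_lt_mul_of_pos_right h3 (show (0:ℝ) < (n:ℝ)^r by positivity)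
        linarith
      exact lt_of_mul_lt_mul_left h2 hfact.le
  have hfin := hdens.mul (TDE.tendsto_choose r)
  have he : (L.choose r : ℝ) / (L:ℝ)^r * r.factorial = (r.factorial : ℝ) / (L:ℝ)^r * L.choose r := by
    ring
  rw [he] at hfin
  refine hfin.congr' ?_
  filter_upwards [Filter.eventually_gt_atTop 0] with n hn0
  have hn0' : (0:ℝ) < n := by exact_mod_cast hn0
  field_simp
end

section
/- Fix integers ℓ > r ≥ 2 and a 2-graph F with χ(F) = ℓ. For every ε > 0 there exist n₀ = n₀(r, ℓ, ε) > 0 and η = η(r, ℓ, ε) > 0 such that: if n > n₀ and G is an n-vertex H_F^(r)-free r-graph with |E(G)| ≥ t_r(n, ℓ−1) − η·C(n, r), then G is ε-close to T_r(n, ℓ−1). -/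
open Finset

theorem se_card_fiber {n : ℕ} (r : ℕ) (e : Finset (Fin n)) (he : e.card = r) :
    (univ.filter (fun x : Fin r → Fin n => univ.image x = e)).card = r.factorial := by
  classical
  have h1 : Fintype.card (Fin r ↪ e) = r.factorial := by
    rw [Fintype.card_embedding_eq]
    simp [he, Nat.descFactorial_self]
  rw [← h1, ← Finset.card_univ]
  symm
  apply Finset.card_bij (fun (g : Fin r ↪ e) _ => fun i => (g i : Fin n))
  · intro g _
    simp only [mem_filter, mem_univ, true_and]
    apply Finset.eq_of_subset_of_card_le
    · intro v hv
      simp only [mem_image, mem_univ, true_and] at hv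
      obtain ⟨i, rfl⟩ := hv
      exact (g i).2
    · rw [Finset.card_image_of_injective, he]
      · simp
      · intro i j hij
        exact g.injective (Subtype.ext hij)
  · intro g _ g' _ h
    ext i
    exact congrArg Fin.val (congrFun h i)
  · intro x hx
    simp only [mem_filter, mem_univ, true_and] at hx
    have hinj : Function.Injective x := by
      have : (univ.image x).card = (univ : Finset (Fin r)).card := by rw [hx, he]; simp
      have := Finset.card_image_iff.1 this
      intro i j hij
      exact this (by simp) (by simp) hij
    refine ⟨⟨fun i => ⟨x i, by rw [← hx]; simp⟩, ?_⟩, by simp, rfl⟩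
    intro i j hij
    exact hinj (congrArg Subtype.val hij)

theorem se_card_tuples {n : ℕ} (r : ℕ) (G : Finset (Finset (Fin n))) (hG : ∀ e ∈ G, e.card = r) :
    (univ.filter (fun x : Fin r → Fin n => univ.image x ∈ G)).card = G.card * r.factorial := by
  classical
  rw [Finset.card_eq_sum_card_fiberwise (f := fun x : Fin r → Fin n => univ.image x) (t := G)]
  · rw [Finset.sum_const_nat]
    intro e he
    rw [← se_card_fiber r e (hG e he), Finset.filter_filter]
    congr 1
    ext x
    simp only [mem_filter, mem_univ, true_and]
    constructor
    · exact fun h => h.2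
    · exact fun h => ⟨h ▸ he, h⟩
  · intro x hx
    simpa using hx

theorem se_card_link {n : ℕ} (r s : ℕ) (G : Finset (Finset (Fin n))) (hG : ∀ e ∈ G, e.card = r)
    (U : Finset (Fin n)) (hU : U.card = s) (hGU : ∀ e ∈ G, U ⊆ e) :
    G.card ≤ (univ.filter (fun z : Fin (r - s) → Fin n => U ∪ univ.image z ∈ G)).card := by
  classical
  have : ∀ e ∈ G, ∃ z : Fin (r - s) → Fin n, U ∪ univ.image z = e := by
    intro e he
    have hc : (e \ U).card = r - s := by
      rw [Finset.card_sdiff_of_subset (hGU e he), hG e he, hU]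
    refine ⟨fun i => ((e \ U).equivFinOfCardEq hc).symm i, ?_⟩
    have : univ.image (fun i => (((e \ U).equivFinOfCardEq hc).symm i : Fin n)) = e \ U := by
      ext v
      simp only [mem_image, mem_univ, true_and]
      constructor
      · rintro ⟨i, rfl⟩
        exact (((e \ U).equivFinOfCardEq hc).symm i).2
      · intro hv
        exact ⟨(e \ U).equivFinOfCardEq hc ⟨v, hv⟩, by simp⟩
    rw [this]
    exact Finset.union_sdiff_of_subset (hGU e he)
  apply Finset.card_le_card_of_surjOn (fun z : Fin (r - s) → Fin n => U ∪ univ.image z)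
  intro e he
  obtain ⟨z, hz⟩ := this e he
  refine ⟨z, ?_, hz⟩
  simp only [coe_filter, mem_univ, true_and, Set.mem_ofPred_eq]
  rw [hz]; exact he

theorem se_card_link' {n : ℕ} (r s : ℕ) (G : Finset (Finset (Fin n))) (hG : ∀ e ∈ G, e.card = r)
    (U : Finset (Fin n)) (hU : U.card = s) (hGU : ∀ e ∈ G, U ⊆ e) :
    G.card ≤ n ^ (r - s) := by
  refine (se_card_link r s G hG U hU hGU).trans ((Finset.card_le_univ _).trans ?_)
  simp

/-- number of functions with a coincidence -/
theorem se_card_coinc {T : Type*} [Fintype T] [DecidableEq T] (n : ℕ) (j j' : T) (h : j ≠ j') :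
    n * (univ.filter (fun a : T → Fin n => a j = a j')).card ≤ n ^ Fintype.card T := by
  classical
  have : (univ : Finset (Fin n)).card * (univ.filter (fun a : T → Fin n => a j = a j')).card ≤
      (univ : Finset (T → Fin n)).card := by
    rw [← Finset.card_product]
    apply Finset.card_le_card_of_injOn (fun q => Function.update q.2 j q.1)
    · intro q _; simp
    · rintro ⟨v, a⟩ ha ⟨v', a'⟩ ha' hq
      simp only [coe_product, coe_univ, coe_filter, mem_univ, true_and, Set.mem_prod,
        Set.mem_univ, Set.mem_ofPred_eq] at ha ha' hq
      have h1 := congrFun hq j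
      simp only [Function.update_self] at h1
      have h2 : ∀ i, i ≠ j → a i = a' i := by
        intro i hi
        have := congrFun hq i
        simpa [Function.update_of_ne hi] using this
      have h3 : a = a' := by
        ext i
        by_cases hi : i = j
        · subst hi; rw [ha, ha', h2 j' h.symm]
        · rw [h2 i hi]
      rw [h1, h3]
  simpa using this

theorem se_card_noninj (T : Type*) [Fintype T] [DecidableEq T] (n : ℕ) :
    n * (univ.filter (fun a : T → Fin n => ¬ Function.Injective a)).card
      ≤ (Fintype.card T) ^ 2 * n ^ Fintype.card T := by
  classical
  have hsub : univ.filter (fun a : T → Fin n => ¬ Function.Injective a) ⊆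
      ((univ : Finset (T × T)).filter (fun q => q.1 ≠ q.2)).biUnion
        (fun q => univ.filter (fun a : T → Fin n => a q.1 = a q.2)) := by
    intro a ha
    simp only [mem_filter, mem_univ, true_and] at ha
    rw [Function.Injective] at ha
    push Not at ha
    obtain ⟨i, j, hij, hne⟩ := ha
    simp only [mem_biUnion, mem_filter, mem_univ, true_and]
    exact ⟨(i, j), hne, hij⟩
  calc _ ≤ n * ∑ q ∈ (univ : Finset (T × T)).filter (fun q => q.1 ≠ q.2),
        (univ.filter (fun a : T → Fin n => a q.1 = a q.2)).card :=
        Nat.mul_le_mul_left _ ((Finset.card_le_card hsub).trans Finset.card_biUnion_le)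
    _ = ∑ q ∈ (univ : Finset (T × T)).filter (fun q => q.1 ≠ q.2),
        n * (univ.filter (fun a : T → Fin n => a q.1 = a q.2)).card := by rw [Finset.mul_sum]
    _ ≤ ∑ q ∈ (univ : Finset (T × T)).filter (fun q => q.1 ≠ q.2), n ^ Fintype.card T := by
        apply Finset.sum_le_sum
        intro q hq
        exact se_card_coinc n q.1 q.2 (by simpa using hq)
    _ ≤ _ := by
        rw [Finset.sum_const, smul_eq_mul]
        apply Nat.mul_le_mul_right
        refine (Finset.card_le_univ _).trans ?_
        simp [sq]

theorem se_kst (T : Type*) [Fintype T] [DecidableEq T] (l : ℕ) : ∀ p : ℝ, 0 < p → ∃ n₀ : ℕ,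
    ∀ n : ℕ, n₀ ≤ n → ∀ S : Finset (Fin l → Fin n), p * (n : ℝ) ^ l ≤ S.card →
      ∃ y : Fin l → T → Fin n, (∀ i, Function.Injective (y i)) ∧
        ∀ s : Fin l → T, (fun i => y i (s i)) ∈ S := by
  classical
  induction l with
  | zero =>
    intro p hp
    refine ⟨0, fun n _ S hS => ⟨fun i => i.elim0, fun i => i.elim0, fun s => ?_⟩⟩
    have : 0 < S.card := by
      have : (0 : ℝ) < S.card := lt_of_lt_of_le (by simpa using hp) hS
      exact_mod_cast this
    obtain ⟨x, hx⟩ := Finset.card_pos.1 this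
    convert hx
  | succ l ih =>
    intro p hp
    set t := Fintype.card T with ht
    obtain ⟨n₁, hn₁⟩ := ih (p ^ t / 2) (by positivity)
    obtain ⟨n₂, hn₂⟩ := exists_nat_gt (2 * (t : ℝ) ^ 2 / p ^ t)
    refine ⟨max n₁ (n₂ + 1), fun n hn S hS => ?_⟩
    have hn1 : n₁ ≤ n := le_trans (le_max_left _ _) hn
    have hn2 : n₂ + 1 ≤ n := le_trans (le_max_right _ _) hn
    have hnpos : (0 : ℝ) < n := by
      have : 0 < n := by omega
      exact_mod_cast this
    have hnbig : 2 * (t : ℝ) ^ 2 < p ^ t * n := by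
      have : (n₂ : ℝ) < n := by exact_mod_cast (by omega : n₂ < n)
      have h2 := hn₂.trans this
      rw [div_lt_iff₀ (by positivity)] at h2
      linarith
    let Sa : (T → Fin n) → Finset (Fin l → Fin n) := fun a =>
      univ.filter (fun z => ∀ j, (Fin.cons (a j) z : Fin (l+1) → Fin n) ∈ S)
    let D : (Fin l → Fin n) → Finset (Fin n) := fun z =>
      univ.filter (fun v => (Fin.cons v z : Fin (l+1) → Fin n) ∈ S)
    have hsum1 : ∑ a, (Sa a).card = ∑ z, (D z).card ^ t := by
      have := Finset.sum_card_bipartiteAbove_eq_sum_card_bipartiteBelow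
        (s := (univ : Finset (T → Fin n))) (t := (univ : Finset (Fin l → Fin n)))
        (fun a z => ∀ j, (Fin.cons (a j) z : Fin (l+1) → Fin n) ∈ S)
      simp only [Finset.bipartiteAbove, Finset.bipartiteBelow] at this
      rw [this]
      apply Finset.sum_congr rfl
      intro z _
      have : univ.filter (fun a : T → Fin n => ∀ j, (Fin.cons (a j) z : Fin (l+1) → Fin n) ∈ S)
          = Fintype.piFinset (fun _ : T => D z) := by
        ext a; simp [D]
      rw [this, Fintype.card_piFinset]; simp [ht]
    have hsum2 : ∑ z, (D z).card = S.card := by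
      have h := Finset.card_eq_sum_card_fiberwise (s := S) (t := univ)
        (f := fun x : Fin (l+1) → Fin n => Fin.tail x) (by intro x _; simp)
      rw [h]
      apply Finset.sum_congr rfl
      intro z _
      apply Finset.card_bij (fun v _ => (Fin.cons v z : Fin (l+1) → Fin n))
      · intro v hv; simpa [D] using hv
      · intro v _ v' _ h; exact (Fin.cons_injective2 h).1
      · intro x hx
        simp only [mem_filter] at hx
        refine ⟨x 0, ?_, ?_⟩
        · simp only [D, mem_filter, mem_univ, true_and]
          rw [← hx.2, Fin.cons_self_tail]; exact hx.1
        · rw [← hx.2, Fin.cons_self_tail]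
    have hJ : p ^ t * (n : ℝ) ^ t * (n : ℝ) ^ l ≤ ∑ a, ((Sa a).card : ℝ) := by
      have hj := Real.pow_arith_mean_le_arith_mean_pow (univ : Finset (Fin l → Fin n))
        (fun _ => 1 / (n : ℝ) ^ l) (fun z => ((D z).card : ℝ)) (by intros; positivity)
        (by simp; field_simp) (by intros; positivity) t
      simp only [← Finset.mul_sum] at hj
      have e1 : ∑ z, ((D z).card : ℝ) = S.card := by exact_mod_cast hsum2
      have e2 : ∑ z, ((D z).card : ℝ) ^ t = ∑ a, ((Sa a).card : ℝ) := by exact_mod_cast hsum1.symm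
      rw [e1, e2] at hj
      have h3 : (p * n) ^ t ≤ (1 / (n : ℝ) ^ l * S.card) ^ t := by
        apply pow_le_pow_left₀ (by positivity)
        rw [one_div, inv_mul_eq_div, le_div_iff₀ (by positivity)]
        calc _ = p * (n : ℝ) ^ (l + 1) := by ring
          _ ≤ _ := hS
      have h4 := h3.trans hj
      rw [one_div, inv_mul_eq_div, le_div_iff₀ (by positivity), mul_pow] at h4
      exact h4
    have hSal : ∀ a, ((Sa a).card : ℝ) ≤ (n : ℝ) ^ l := by
      intro a
      have : (Sa a).card ≤ n ^ l := (Finset.card_le_univ _).trans (by simp)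
      exact_mod_cast this
    have : ∃ a : T → Fin n, Function.Injective a ∧ p ^ t / 2 * (n : ℝ) ^ l ≤ (Sa a).card := by
      by_contra hcon
      push Not at hcon
      have hb : ∑ a, ((Sa a).card : ℝ) ≤
          ∑ a : T → Fin n, ((if ¬ Function.Injective a then (n : ℝ) ^ l else 0)
            + p ^ t / 2 * (n : ℝ) ^ l) := by
        apply Finset.sum_le_sum
        intro a _
        by_cases ha : Function.Injective a
        · simp only [ha, not_true, if_false, zero_add]; exact (hcon a ha).le
        · simp only [ha, not_false_iff, if_true]
          have := hSal a
          have : 0 ≤ p ^ t / 2 * (n : ℝ) ^ l := by positivity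
          linarith [hSal a]
      rw [Finset.sum_add_distrib, ← Finset.sum_filter, Finset.sum_const, Finset.sum_const,
        nsmul_eq_mul, nsmul_eq_mul] at hb
      have hc : ((univ : Finset (T → Fin n)).card : ℝ) = (n : ℝ) ^ t := by simp [ht]
      rw [hc] at hb
      have hni : (n : ℝ) * ((univ.filter (fun a : T → Fin n => ¬ Function.Injective a)).card : ℝ)
          ≤ (t : ℝ) ^ 2 * (n : ℝ) ^ t := by exact_mod_cast se_card_noninj T n
      set q := ((univ.filter (fun a : T → Fin n => ¬ Function.Injective a)).card : ℝ)
      have h5 := hJ.trans hb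
      have h6 : p ^ t * (n : ℝ) ^ t / 2 ≤ q := by
        have hl : (0 : ℝ) < (n : ℝ) ^ l := by positivity
        by_contra hq
        push Not at hq
        have := mul_lt_mul_of_pos_right hq hl
        nlinarith
      have h7 : n * (p ^ t * (n : ℝ) ^ t / 2) ≤ (t : ℝ) ^ 2 * (n : ℝ) ^ t :=
        (mul_le_mul_of_nonneg_left h6 hnpos.le).trans hni
      have hl : (0 : ℝ) < (n : ℝ) ^ t := by positivity
      have := mul_lt_mul_of_pos_right hnbig hl
      nlinarith
    obtain ⟨a, ha, hSa⟩ := this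
    obtain ⟨y, hy, hyS⟩ := hn₁ n hn1 (Sa a) hSa
    refine ⟨Fin.cons a y, ?_, ?_⟩
    · intro i
      refine Fin.cases ?_ ?_ i
      · simpa using ha
      · intro i; simpa using hy i
    · intro s
      have := hyS (Fin.tail s)
      simp only [Sa, mem_filter, mem_univ, true_and] at this
      convert this (s 0) using 1
      ext i
      refine Fin.cases ?_ ?_ i
      · simp
      · intro i; simp [Fin.tail]


section SE
open Classical

def SeCl {n : ℕ} (P : SimpleGraph (Fin n)) (s : ℕ) (x : Fin s → Fin n) : Prop :=
  ∀ i j, i ≠ j → P.Adj (x i) (x j)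

def SeNb {n : ℕ} (P : SimpleGraph (Fin n)) {s : ℕ} (x : Fin s → Fin n) (v : Fin n) : Prop :=
  ∀ i, P.Adj v (x i)

noncomputable def seX {n : ℕ} (P : SimpleGraph (Fin n)) (s : ℕ) : ℝ :=
  ∑ x : Fin s → Fin n, if SeCl P s x then 1 else 0

noncomputable def seD {n : ℕ} (P : SimpleGraph (Fin n)) {s : ℕ} (x : Fin s → Fin n) : ℝ :=
  ∑ v, if SeNb P x v then 1 else 0

theorem se_cl_insertNth {n : ℕ} (P : SimpleGraph (Fin n)) {s : ℕ} (p : Fin (s+1)) (v : Fin n)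
    (A : Fin s → Fin n) :
    SeCl P (s+1) (p.insertNth v A : Fin (s+1) → Fin n) ↔ SeCl P s A ∧ SeNb P A v := by
  constructor
  · intro h
    refine ⟨fun i j hij => ?_, fun i => ?_⟩
    · have := h (p.succAbove i) (p.succAbove j) (by simpa using hij)
      simpa using this
    · have := h p (p.succAbove i) (Fin.ne_succAbove p i)
      simpa using this
  · rintro ⟨h1, h2⟩ i j hij
    rcases Fin.eq_self_or_eq_succAbove p i with rfl | ⟨i, rfl⟩
    · rcases Fin.eq_self_or_eq_succAbove i j with rfl | ⟨j, rfl⟩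
      · exact absurd rfl hij
      · simpa using h2 j
    · rcases Fin.eq_self_or_eq_succAbove p j with rfl | ⟨j, rfl⟩
      · simpa using (h2 i).symm
      · simpa using h1 i j (by rintro rfl; exact hij rfl)

/-- summation over (s+1)-cliques through a coordinate -/
theorem se_sum_cl {n : ℕ} (P : SimpleGraph (Fin n)) {s : ℕ} (p : Fin (s+1))
    (f : Fin n → (Fin s → Fin n) → ℝ) :
    ∑ B : Fin (s+1) → Fin n, (if SeCl P (s+1) B then f (B p) (p.removeNth B) else 0)
      = ∑ A : Fin s → Fin n, if SeCl P s A then ∑ v, (if SeNb P A v then f v A else 0) else 0 := by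
  rw [← (Fin.insertNthEquiv (fun _ => Fin n) p).sum_comp]
  rw [Fintype.sum_prod_type_right]
  apply Finset.sum_congr rfl
  intro A _
  by_cases hA : SeCl P s A
  · simp [Fin.insertNthEquiv, se_cl_insertNth, hA]
  · simp [Fin.insertNthEquiv, se_cl_insertNth, hA]

theorem seX_succ {n : ℕ} (P : SimpleGraph (Fin n)) (s : ℕ) :
    seX P (s+1) = ∑ A : Fin s → Fin n, if SeCl P s A then seD P A else 0 :=
  se_sum_cl P 0 (fun _ _ => 1)

theorem seX_nonneg {n : ℕ} (P : SimpleGraph (Fin n)) (s : ℕ) : 0 ≤ seX P s :=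
  Finset.sum_nonneg (fun _ _ => by split_ifs <;> norm_num)

theorem seD_nonneg {n : ℕ} (P : SimpleGraph (Fin n)) {s : ℕ} (x : Fin s → Fin n) : 0 ≤ seD P x :=
  Finset.sum_nonneg (fun _ _ => by split_ifs <;> norm_num)

theorem seD_le {n : ℕ} (P : SimpleGraph (Fin n)) {s : ℕ} (x : Fin s → Fin n) : seD P x ≤ n := by
  calc seD P x ≤ ∑ v : Fin n, (1 : ℝ) := Finset.sum_le_sum (fun _ _ => by split_ifs <;> norm_num)
    _ = n := by simp

theorem seX_zero {n : ℕ} (P : SimpleGraph (Fin n)) : seX P 0 = 1 := by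
  simp [seX, SeCl]

theorem seX_le_pow {n : ℕ} (P : SimpleGraph (Fin n)) (s : ℕ) : seX P s ≤ (n : ℝ) ^ s := by
  calc seX P s ≤ ∑ x : Fin s → Fin n, (1 : ℝ) :=
        Finset.sum_le_sum (fun _ _ => by split_ifs <;> norm_num)
    _ = _ := by simp

/-- sum of squared codegrees -/
noncomputable def seQ {n : ℕ} (P : SimpleGraph (Fin n)) (s : ℕ) : ℝ :=
  ∑ A : Fin s → Fin n, if SeCl P s A then seD P A ^ 2 else 0

theorem se_cauchy {n : ℕ} (P : SimpleGraph (Fin n)) (s : ℕ) :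
    seX P (s+1) ^ 2 ≤ seX P s * seQ P s := by
  rw [seX_succ]
  have := Finset.sum_mul_sq_le_sq_mul_sq (univ : Finset (Fin s → Fin n))
    (fun A => if SeCl P s A then (1:ℝ) else 0) (fun A => if SeCl P s A then seD P A else 0)
  calc _ = (∑ A : Fin s → Fin n, (if SeCl P s A then (1:ℝ) else 0) *
        (if SeCl P s A then seD P A else 0)) ^ 2 := by
        congr 1; apply Finset.sum_congr rfl; intro A _; split_ifs <;> simp
    _ ≤ _ := this
    _ = _ := by
        unfold seX seQ
        congr 1 <;> (apply Finset.sum_congr rfl; intro A _; split_ifs <;> simp)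

theorem se_sum_removeNth {n : ℕ} (P : SimpleGraph (Fin n)) (s : ℕ) (p : Fin (s+1)) :
    ∑ B : Fin (s+1) → Fin n, (if SeCl P (s+1) B then seD P (p.removeNth B) else 0) = seQ P s := by
  rw [se_sum_cl P p (fun _ A => seD P A)]
  apply Finset.sum_congr rfl
  intro A _
  split_ifs
  · rw [sq]
    conv_rhs => rw [seD]
    rw [Finset.sum_mul]
    apply Finset.sum_congr rfl; intro v _; split_ifs <;> simp [seD]
  · rfl

/-- pointwise Moon--Moser -/
theorem se_pointwise {n : ℕ} (P : SimpleGraph (Fin n)) (s : ℕ) (B : Fin (s+1) → Fin n) (v : Fin n) :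
    ∑ p : Fin (s+1), (if SeNb P (p.removeNth B) v then (1:ℝ) else 0)
      ≤ 1 + s * (if SeNb P B v then 1 else 0) := by
  by_cases h : SeNb P B v
  · rw [if_pos h]
    calc _ ≤ ∑ p : Fin (s+1), (1:ℝ) := Finset.sum_le_sum (fun _ _ => by split_ifs <;> norm_num)
      _ = _ := by simp [add_comm]
  · rw [if_neg h]
    unfold SeNb at h
    push Not at h
    obtain ⟨q, hq⟩ := h
    calc _ ≤ ∑ p : Fin (s+1), (if p = q then (1:ℝ) else 0) := by
          apply Finset.sum_le_sum
          intro p _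
          by_cases hp : p = q
          · subst hp; simp only [if_true]; split_ifs <;> norm_num
          · have : ¬ SeNb P (p.removeNth B) v := by
              intro h
              obtain ⟨i, hi⟩ := Fin.exists_succAbove_eq (Ne.symm hp)
              have := h i
              rw [Fin.removeNth, hi] at this
              exact hq this
            rw [if_neg this, if_neg hp]
      _ = _ := by simp

theorem se_mm {n : ℕ} (P : SimpleGraph (Fin n)) (s : ℕ) :
    ((s:ℝ)+1) * seQ P s ≤ n * seX P (s+1) + s * seX P (s+2) := by
  have h1 : ((s:ℝ)+1) * seQ P s = ∑ B : Fin (s+1) → Fin n,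
      (if SeCl P (s+1) B then ∑ p : Fin (s+1), seD P (p.removeNth B) else 0) := by
    have : ∑ p : Fin (s+1), ∑ B : Fin (s+1) → Fin n,
      (if SeCl P (s+1) B then seD P (p.removeNth B) else 0) = ((s:ℝ)+1) * seQ P s := by
      simp [se_sum_removeNth]
    rw [← this, Finset.sum_comm]
    apply Finset.sum_congr rfl; intro B _; split_ifs <;> simp
  rw [h1, seX_succ P (s+1), seX, Finset.mul_sum, Finset.mul_sum, ← Finset.sum_add_distrib]
  apply Finset.sum_le_sum
  intro B _
  split_ifs
  · unfold seD
    rw [Finset.sum_comm, Finset.mul_sum]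
    calc _ ≤ ∑ v, (1 + s * (if SeNb P B v then (1:ℝ) else 0)) :=
          Finset.sum_le_sum (fun v _ => se_pointwise P s B v)
      _ = _ := by rw [Finset.sum_add_distrib]; simp
  · simp

/-- edges inside the common neighbourhood -/
noncomputable def seI {n : ℕ} (P : SimpleGraph (Fin n)) {s : ℕ} (A : Fin s → Fin n) : ℝ :=
  ∑ v, if SeNb P A v then (∑ w, if SeNb P A w ∧ P.Adj w v then (1:ℝ) else 0) else 0

theorem seI_nonneg {n : ℕ} (P : SimpleGraph (Fin n)) {s : ℕ} (A : Fin s → Fin n) : 0 ≤ seI P A := by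
  unfold seI
  apply Finset.sum_nonneg; intro v _
  split_ifs
  · apply Finset.sum_nonneg; intro w _
    split_ifs <;> norm_num
  · rfl

theorem se_sum_I {n : ℕ} (P : SimpleGraph (Fin n)) (s : ℕ) :
    ∑ A : Fin s → Fin n, (if SeCl P s A then seI P A else 0) = seX P (s+2) := by
  rw [seX_succ]
  have := se_sum_cl P (s := s) 0 (fun v A => seD P (Fin.insertNth 0 v A : Fin (s+1) → Fin n))
  simp only [Fin.insertNth_self_removeNth] at this
  rw [this]
  apply Finset.sum_congr rfl; intro A _
  split_ifs
  · unfold seI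
    apply Finset.sum_congr rfl; intro v _
    split_ifs
    · unfold seD
      apply Finset.sum_congr rfl; intro w _
      congr 1
      simp only [SeNb, eq_iff_iff]
      rw [Fin.forall_iff_succAbove (0 : Fin (s+1))]
      simp [and_comm]
    · rfl
  · rfl

theorem se_sum_I_removeNth {n : ℕ} (P : SimpleGraph (Fin n)) (s : ℕ) (p : Fin (s+1)) :
    ∑ B : Fin (s+1) → Fin n, (if SeCl P (s+1) B then seI P (p.removeNth B) else 0)
      ≤ n * seX P (s+2) := by
  rw [se_sum_cl P p (fun _ A => seI P A), ← se_sum_I, Finset.mul_sum]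
  apply Finset.sum_le_sum
  intro A _
  split_ifs
  · calc _ = seD P A * seI P A := by
          rw [seD, Finset.sum_mul]
          apply Finset.sum_congr rfl; intro v _; split_ifs <;> simp
      _ ≤ _ := mul_le_mul_of_nonneg_right (seD_le P A) (seI_nonneg P A)
  · simp
end SE


noncomputable def sePi (k s : ℕ) : ℝ := ∏ i ∈ range s, (1 - (i:ℝ) / k)

theorem sePi_succ (k s : ℕ) : sePi k (s+1) = sePi k s * (1 - (s:ℝ)/k) := by
  simp [sePi, Finset.prod_range_succ]

theorem sePi_pos {k s : ℕ} (hk : 0 < k) (hs : s ≤ k) : 0 < sePi k s := by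
  apply Finset.prod_pos
  intro i hi
  have hi' : i < k := lt_of_lt_of_le (by simpa using hi) hs
  have : (i:ℝ) < k := by exact_mod_cast hi'
  have hk' : (0:ℝ) < k := by exact_mod_cast hk
  rw [sub_pos, div_lt_one hk']; exact this

theorem se_seq_exact (k r : ℕ) (hr : 2 ≤ r) (hk : r ≤ k) (h : ℕ → ℝ) (h0 : ∀ s, 0 ≤ h s)
    (hz : h 0 = 1) (hmm : ∀ s : ℕ, ((s:ℝ)+1) * h (s+1) ^ 2 ≤ h s * (h (s+1) + s * h (s+2)))
    (hk1 : h (k+1) ≤ 0) (hhr : sePi k r ≤ h r) : ∀ s, s ≤ k → h s = sePi k s := by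
  have hkp : (0:ℝ) < k := by
    have : 0 < k := by omega
    exact_mod_cast this
  -- backward ratio bounds
  have hback : ∀ j s, s + j = k → h (s+1) ≤ h s * (1 - (s:ℝ)/k) := by
    intro j
    induction j with
    | zero =>
      intro s hs
      have : s = k := by omega
      subst this
      rw [div_self hkp.ne']; simpa using hk1
    | succ j ih =>
      intro s hs
      have h1 := ih (s+1) (by omega)
      rcases (h0 (s+1)).eq_or_lt with h2 | h2
      · rw [← h2]
        apply mul_nonneg (h0 s)
        rw [sub_nonneg, div_le_one hkp]
        exact_mod_cast (by omega : s ≤ k)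
      · have h3 := hmm s
        have h4 : h s * (h (s+1) + s * h (s+2)) ≤
            h s * (h (s+1) + s * (h (s+1) * (1 - ((s+1 : ℕ):ℝ)/k))) := by
          apply mul_le_mul_of_nonneg_left _ (h0 s)
          have : (0:ℝ) ≤ s := by positivity
          have := mul_le_mul_of_nonneg_left h1 this
          simpa using this
        have h5 := h3.trans h4
        have h6 : h s * (h (s+1) + s * (h (s+1) * (1 - ((s+1 : ℕ):ℝ)/k)))
            = ((s:ℝ)+1) * h (s+1) * (h s * (1 - (s:ℝ)/k)) := by
          push_cast; field_simp; ring
        rw [h6, sq, ← mul_assoc] at h5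
        exact le_of_mul_le_mul_left h5 (by positivity)
  have hback' : ∀ s, s ≤ k → h (s+1) ≤ h s * (1 - (s:ℝ)/k) := fun s hs => hback (k - s) s (by omega)
  have hfac : ∀ s, s ≤ k → 0 ≤ 1 - (s:ℝ)/k := by
    intro s hs
    rw [sub_nonneg, div_le_one hkp]; exact_mod_cast hs
  have hup : ∀ s, s ≤ k → h s ≤ sePi k s := by
    intro s
    induction s with
    | zero => intro _; simp [sePi, hz]
    | succ s ih =>
      intro hs
      rw [sePi_succ]
      exact (hback' s (by omega)).trans (mul_le_mul_of_nonneg_right (ih (by omega)) (hfac s (by omega)))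
  have hdown : ∀ j s, s + j = r → h s = sePi k s := by
    intro j
    induction j with
    | zero =>
      intro s hs
      have : s = r := by omega
      subst this
      exact le_antisymm (hup _ hk) hhr
    | succ j ih =>
      intro s hs
      apply le_antisymm (hup s (by omega))
      have h1 := hback' s (by omega)
      rw [ih (s+1) (by omega), sePi_succ] at h1
      apply le_of_mul_le_mul_right h1
      rw [sub_pos, div_lt_one hkp]
      exact_mod_cast (by omega : s < k)
  have hforw : ∀ j, r + j ≤ k → h (r+j-1) = sePi k (r+j-1) ∧ h (r+j) = sePi k (r+j) := by
    intro j
    induction j with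
    | zero => intro _; exact ⟨hdown 1 _ (by omega), hdown 0 _ (by omega)⟩
    | succ j ih =>
      intro hj
      obtain ⟨h1, h2⟩ := ih (by omega)
      refine ⟨by simpa using h2, ?_⟩
      obtain ⟨s, hs⟩ : ∃ s, r + j = s + 2 := ⟨r + j - 2, by omega⟩
      rw [show r + j - 1 = s + 1 by omega] at h1
      rw [hs] at h2
      rw [show r + (j+1) = s + 1 + 2 by omega]
      apply le_antisymm (hup _ (by omega))
      have h3 := hmm (s+1)
      rw [show s + 1 + 1 = s + 2 by omega] at h3
      rw [h1, h2] at h3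
      have e2 : sePi k (s+2) = sePi k (s+1) * (1 - ((s+1:ℕ):ℝ)/k) := sePi_succ k (s+1)
      have e3 : sePi k (s+1+2) = sePi k (s+2) * (1 - ((s+2:ℕ):ℝ)/k) := sePi_succ k (s+2)
      have p1 : 0 < sePi k (s+1) := sePi_pos (by omega) (by omega)
      have p2 : 0 < sePi k (s+2) := sePi_pos (by omega) (by omega)
      have h4 : (((s+1:ℕ):ℝ)+1) * (sePi k (s+2) * (1 - ((s+1:ℕ):ℝ)/k)) ≤
          sePi k (s+2) + ((s+1:ℕ):ℝ) * h (s+1+2) := by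
        apply le_of_mul_le_mul_left _ p1
        calc _ = (((s+1:ℕ):ℝ)+1) * sePi k (s+2) ^ 2 := by rw [sq]; nth_rw 3 [e2]; ring
          _ ≤ _ := h3
      have h5 : ((s+1:ℕ):ℝ) * sePi k (s+1+2) ≤ ((s+1:ℕ):ℝ) * h (s+1+2) := by
        have : ((s+1:ℕ):ℝ) * sePi k (s+1+2) = (((s+1:ℕ):ℝ)+1) * (sePi k (s+2) * (1 - ((s+1:ℕ):ℝ)/k))
          - sePi k (s+2) := by
          rw [e3]; push_cast; field_simp; ring
        linarith
      exact le_of_mul_le_mul_left h5 (by positivity)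
  intro s hs
  by_cases hsr : s ≤ r
  · exact hdown (r - s) s (by omega)
  · have := (hforw (s - r) (by omega)).2
    rwa [show r + (s - r) = s by omega] at this

theorem se_seq (k r : ℕ) (hr : 2 ≤ r) (hk : r ≤ k) (η : ℝ) (hη : 0 < η) : ∃ δ : ℝ, 0 < δ ∧
    ∀ h : ℕ → ℝ, (∀ s, 0 ≤ h s) → (∀ s, h s ≤ 1) → h 0 = 1 →
    (∀ s : ℕ, ((s:ℝ)+1) * h (s+1) ^ 2 ≤ h s * (h (s+1) + s * h (s+2))) →
    h (k+1) ≤ δ → sePi k r - δ ≤ h r → ∀ s, s ≤ k → |h s - sePi k s| < η := by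
  let K : Set (ℕ → ℝ) := Set.pi Set.univ (fun _ => Set.Icc (0:ℝ) 1) ∩
    ({h | h 0 = 1} ∩ ({h | ∀ s : ℕ, ((s:ℝ)+1) * h (s+1) ^ 2 ≤ h s * (h (s+1) + s * h (s+2))} ∩
      ⋃ s ∈ range (k+1), {h | η ≤ |h s - sePi k s|}))
  have hKc : IsCompact K := by
    apply IsCompact.inter_right (isCompact_univ_pi (fun _ => isCompact_Icc))
    apply IsClosed.inter (isClosed_eq (by fun_prop) (by fun_prop))
    apply IsClosed.inter
    · simp only [Set.ofPred_forall]
      apply isClosed_iInter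
      intro s
      exact isClosed_le (by fun_prop) (by fun_prop)
    · apply Set.Finite.isClosed_biUnion (Finset.finite_toSet _)
      intro s _
      exact isClosed_le (by fun_prop) (by fun_prop)
  rcases K.eq_empty_or_nonempty with hKe | hKn
  · refine ⟨1, one_pos, fun h h0 h1 hz hmm _ _ s hs => ?_⟩
    by_contra hc
    push Not at hc
    have : h ∈ K := by
      refine ⟨fun i _ => ⟨h0 i, h1 i⟩, hz, hmm, ?_⟩
      simp only [Set.mem_iUnion]
      exact ⟨s, by simp; omega, hc⟩
    rw [hKe] at this; exact this
  · obtain ⟨g, hg, hmin⟩ := hKc.exists_isMinOn hKn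
      (f := fun h : ℕ → ℝ => max (h (k+1)) (sePi k r - h r)) (by fun_prop)
    have hpos : 0 < max (g (k+1)) (sePi k r - g r) := by
      by_contra hc
      push Not at hc
      have c1 := (le_max_left _ _).trans hc
      have c2 := (le_max_right _ _).trans hc
      obtain ⟨hg1, hg2, hg3, hg4⟩ := hg
      have := se_seq_exact k r hr hk g (fun s => (hg1 s (Set.mem_univ _)).1) hg2 hg3 c1 (by linarith)
      simp only [Set.mem_iUnion] at hg4
      obtain ⟨s, hs, hs2⟩ := hg4
      have hs2 : η ≤ |g s - sePi k s| := hs2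
      rw [this s (by simp at hs; omega)] at hs2
      simp at hs2; linarith
    refine ⟨max (g (k+1)) (sePi k r - g r) / 2, by linarith, fun h h0 h1 hz hmm e1 e2 s hs => ?_⟩
    by_contra hc
    push Not at hc
    have hK : h ∈ K := by
      refine ⟨fun i _ => ⟨h0 i, h1 i⟩, hz, hmm, ?_⟩
      simp only [Set.mem_iUnion]
      exact ⟨s, by simp; omega, hc⟩
    have h3 : max (g (k+1)) (sePi k r - g r) ≤ max (h (k+1)) (sePi k r - h r) := hmin hK
    have h4 : max (h (k+1)) (sePi k r - h r) ≤ max (g (k+1)) (sePi k r - g r) / 2 :=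
      max_le e1 (by linarith)
    linarith


section SE2
open Classical

theorem se_real_aux (k q : ℕ) (hkq : k = q + 1) (ε η π h h' H S π' : ℝ) (hη : 0 < η)
    (hπ : 0 < π) (hπ' : (k:ℝ) * π = π')
    (h1 : |h - π| < η) (h2 : |h' - π'| < η) (hη1 : η ≤ π / 2)
    (hη2 : ((k:ℝ)+1) * η ≤ ε * π / 4) (hS : h ^ 2 ≤ h' * S)
    (hH : ((q:ℝ) + k) * H ≤ ε * π / 4) : h - k * S + ((q:ℝ) + k) * H ≤ ε * h := by
  rw [abs_lt] at h1 h2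
  have hk1 : (1:ℝ) ≤ k := by rw [hkq]; push_cast; linarith [(Nat.cast_nonneg q : (0:ℝ) ≤ q)]
  have hε : 0 < ε := by
    have : 0 < ((k:ℝ)+1) * η := by positivity
    by_contra hc
    push Not at hc
    nlinarith
  have hh : π / 2 ≤ h := by linarith
  have hh' : π / 2 ≤ h' := by
    have : π ≤ π' := by rw [← hπ']; nlinarith
    linarith
  have h3 : h' - k * h ≤ (k+1) * η := by nlinarith
  have h4 : h' * (h - k * S) ≤ h * ((k+1) * η) := by nlinarith
  have h5 : h' * (h - k * S) ≤ h' * (ε / 2 * h) := by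
    have : h * ((k+1) * η) ≤ h * (ε / 2 * h') := by
      apply mul_le_mul_of_nonneg_left _ (by linarith)
      nlinarith
    nlinarith
  have h6 := le_of_mul_le_mul_left h5 (by linarith)
  have h7 : ε * π / 4 ≤ ε / 2 * h := by nlinarith
  linarith

theorem se_exists_B {n : ℕ} (P : SimpleGraph (Fin n)) (q : ℕ) (ε : ℝ)
    (hpos : 0 < seX P (q+1))
    (hle : (n:ℝ)^2 * seX P (q+1) + ((q:ℝ) + (q+1)) * (n * seX P (q+2)) - n * ((q+1) * seQ P q)
      ≤ ε * n^2 * seX P (q+1)) :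
    ∃ B : Fin (q+1) → Fin n,
      n * (n + q * seD P B - ∑ p : Fin (q+1), seD P (p.removeNth B)) + ∑ p : Fin (q+1), seI P (p.removeNth B) ≤ ε * n^2 := by
  by_contra hc
  push Not at hc
  let g : (Fin (q+1) → Fin n) → ℝ := fun B =>
    n * (n + q * seD P B - ∑ p : Fin (q+1), seD P (p.removeNth B)) + ∑ p : Fin (q+1), seI P (p.removeNth B)
  have h1 : ε * n^2 * seX P (q+1) < ∑ B, if SeCl P (q+1) B then g B else 0 := by
    have : ∃ B, SeCl P (q+1) B := by
      by_contra hno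
      push Not at hno
      simp [seX, hno] at hpos
    obtain ⟨B₀, hB₀⟩ := this
    rw [seX, Finset.mul_sum]
    apply Finset.sum_lt_sum
    · intro B _
      split_ifs
      · simpa using (hc B).le
      · simp
    · exact ⟨B₀, by simp, by simpa [hB₀] using hc B₀⟩
  have e1 : ∑ B : Fin (q+1) → Fin n, (if SeCl P (q+1) B then ∑ p : Fin (q+1), seD P (p.removeNth B) else 0)
      = (q+1) * seQ P q := by
    have : ∑ p : Fin (q+1), ∑ B : Fin (q+1) → Fin n,
      (if SeCl P (q+1) B then seD P (p.removeNth B) else 0) = ((q:ℝ)+1) * seQ P q := by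
      simp [se_sum_removeNth]
    rw [← this, Finset.sum_comm]
    apply Finset.sum_congr rfl; intro B _; split_ifs <;> simp
  have e2 : ∑ B : Fin (q+1) → Fin n, (if SeCl P (q+1) B then ∑ p : Fin (q+1), seI P (p.removeNth B) else 0)
      ≤ (q+1) * (n * seX P (q+2)) := by
    have : ∑ p : Fin (q+1), ∑ B : Fin (q+1) → Fin n,
      (if SeCl P (q+1) B then seI P (p.removeNth B) else 0) ≤ ∑ p : Fin (q+1), n * seX P (q+2) :=
      Finset.sum_le_sum (fun p _ => se_sum_I_removeNth P q p)
    rw [Finset.sum_comm] at this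
    refine le_trans (le_of_eq ?_) (this.trans (le_of_eq ?_))
    · apply Finset.sum_congr rfl; intro B _; split_ifs <;> simp
    · simp
  have e3 : ∑ B, (if SeCl P (q+1) B then g B else 0) =
      (n:ℝ)^2 * seX P (q+1) + n * q * seX P (q+2)
      - n * ∑ B : Fin (q+1) → Fin n, (if SeCl P (q+1) B then ∑ p : Fin (q+1), seD P (p.removeNth B) else 0)
      + ∑ B : Fin (q+1) → Fin n, (if SeCl P (q+1) B then ∑ p : Fin (q+1), seI P (p.removeNth B) else 0) := by
    rw [seX_succ P (q+1), seX, Finset.mul_sum, Finset.mul_sum, Finset.mul_sum,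
      ← Finset.sum_add_distrib, ← Finset.sum_sub_distrib, ← Finset.sum_add_distrib]
    apply Finset.sum_congr rfl; intro B _
    split_ifs
    · simp only [g]; ring
    · simp
  rw [e3, e1] at h1
  nlinarith

theorem se_colour {n : ℕ} (P : SimpleGraph (Fin n)) (q : ℕ) (ε : ℝ) (hn : 0 < n)
    (B : Fin (q+1) → Fin n)
    (hB : n * (n + q * seD P B - ∑ p : Fin (q+1), seD P (p.removeNth B)) + ∑ p : Fin (q+1), seI P (p.removeNth B) ≤ ε * n^2) :
    ∃ c : Fin n → Fin (q+1),
      ∑ v, ∑ w, (if P.Adj w v ∧ c w = c v then (1:ℝ) else 0) ≤ 3 * ε * n^2 := by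
  have hn' : (0:ℝ) < n := by exact_mod_cast hn
  let unc : Fin n → ℝ := fun v => if ∃ p : Fin (q+1), SeNb P (p.removeNth B) v then 0 else 1
  have hunc0 : ∀ v, 0 ≤ unc v := by intro v; simp only [unc]; split_ifs <;> norm_num
  have hunc : ∑ v, unc v ≤ n + q * seD P B - ∑ p : Fin (q+1), seD P (p.removeNth B) := by
    have : (n + q * seD P B - ∑ p : Fin (q+1), seD P (p.removeNth B)) =
      ∑ v, (1 + q * (if SeNb P B v then (1:ℝ) else 0) -
        ∑ p : Fin (q+1), (if SeNb P (p.removeNth B) v then (1:ℝ) else 0)) := by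
      rw [Finset.sum_sub_distrib, Finset.sum_add_distrib, ← Finset.mul_sum, Finset.sum_comm]
      simp [seD]
    rw [this]
    apply Finset.sum_le_sum
    intro v _
    simp only [unc]
    split_ifs with h1 h2 h2
    · have := se_pointwise P q B v
      rw [if_pos h2] at this; linarith
    · have := se_pointwise P q B v
      rw [if_neg h2] at this; linarith
    all_goals
      push Not at h1
      simp only [h1, if_false, Finset.sum_const_zero]
      have : (0:ℝ) ≤ q := by positivity
      linarith
  let c : Fin n → Fin (q+1) := fun v =>
    if h : ∃ p : Fin (q+1), SeNb P (p.removeNth B) v then h.choose else 0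
  have hc : ∀ v, (∃ p : Fin (q+1), SeNb P (p.removeNth B) v) → SeNb P ((c v).removeNth B) v := by
    intro v h
    simp only [c, dif_pos h]
    exact h.choose_spec
  refine ⟨c, ?_⟩
  have hI0 : 0 ≤ ∑ p : Fin (q+1), seI P (p.removeNth B) := Finset.sum_nonneg (fun p _ => seI_nonneg P _)
  have hu0 : 0 ≤ ∑ v, unc v := Finset.sum_nonneg (fun v _ => hunc0 v)
  have hmain : ∑ v, ∑ w, (if P.Adj w v ∧ c w = c v then (1:ℝ) else 0) ≤
      ∑ v, ∑ w, ((∑ p : Fin (q+1), if SeNb P (p.removeNth B) v then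
        (if SeNb P (p.removeNth B) w ∧ P.Adj w v then (1:ℝ) else 0) else 0) + unc v + unc w) := by
    apply Finset.sum_le_sum; intro v _
    apply Finset.sum_le_sum; intro w _
    have hs0 : ∀ p ∈ (univ : Finset (Fin (q+1))), 0 ≤ (if SeNb P (p.removeNth B) v then
        (if SeNb P (p.removeNth B) w ∧ P.Adj w v then (1:ℝ) else 0) else 0) := by
      intro p _; split_ifs <;> norm_num
    by_cases hadj : P.Adj w v ∧ c w = c v
    · rw [if_pos hadj]
      by_cases hv : ∃ p : Fin (q+1), SeNb P (p.removeNth B) v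
      · by_cases hw : ∃ p : Fin (q+1), SeNb P (p.removeNth B) w
        · have hv' := hc v hv
          have hw' := hc w hw
          rw [hadj.2] at hw'
          have := Finset.single_le_sum hs0 (Finset.mem_univ (c v))
          rw [if_pos hv', if_pos ⟨hw', hadj.1⟩] at this
          linarith [hunc0 v, hunc0 w]
        · have : unc w = 1 := by simp only [unc]; rw [if_neg hw]
          linarith [hunc0 v, Finset.sum_nonneg hs0]
      · have : unc v = 1 := by simp only [unc]; rw [if_neg hv]
        linarith [hunc0 w, Finset.sum_nonneg hs0]
    · rw [if_neg hadj]
      linarith [hunc0 v, hunc0 w, Finset.sum_nonneg hs0]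
  have hrhs : ∑ v, ∑ w, ((∑ p : Fin (q+1), if SeNb P (p.removeNth B) v then
        (if SeNb P (p.removeNth B) w ∧ P.Adj w v then (1:ℝ) else 0) else 0) + unc v + unc w)
      = ∑ p : Fin (q+1), seI P (p.removeNth B) + 2 * n * ∑ v, unc v := by
    simp only [Finset.sum_add_distrib]
    have : ∑ v : Fin n, ∑ w : Fin n, ∑ p : Fin (q+1), (if SeNb P (p.removeNth B) v then
        (if SeNb P (p.removeNth B) w ∧ P.Adj w v then (1:ℝ) else 0) else 0)
        = ∑ p : Fin (q+1), seI P (p.removeNth B) := by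
      have h1 : ∀ v : Fin n, ∑ w : Fin n, ∑ p : Fin (q+1), (if SeNb P (p.removeNth B) v then
        (if SeNb P (p.removeNth B) w ∧ P.Adj w v then (1:ℝ) else 0) else 0)
          = ∑ p : Fin (q+1), ∑ w : Fin n, (if SeNb P (p.removeNth B) v then
        (if SeNb P (p.removeNth B) w ∧ P.Adj w v then (1:ℝ) else 0) else 0) := fun v => Finset.sum_comm
      simp only [h1]
      rw [Finset.sum_comm]
      apply Finset.sum_congr rfl; intro p _
      unfold seI
      apply Finset.sum_congr rfl; intro v _
      split_ifs <;> simp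
    rw [this]
    simp only [Finset.sum_const, Finset.card_univ, Fintype.card_fin, nsmul_eq_mul, ← Finset.mul_sum]
    ring
  rw [hrhs] at hmain
  have h5 : n * ∑ v, unc v ≤ n * (n + q * seD P B - ∑ p : Fin (q+1), seD P (p.removeNth B)) :=
    mul_le_mul_of_nonneg_left hunc hn'.le
  have h6 : 0 ≤ n * ∑ v, unc v := by positivity
  nlinarith

theorem se_struct (k r : ℕ) (hr : 2 ≤ r) (hk : r ≤ k) (ε : ℝ) (hε : 0 < ε) : ∃ δ : ℝ, 0 < δ ∧
    ∀ n : ℕ, 0 < n → ∀ P : SimpleGraph (Fin n), seX P (k+1) ≤ δ * n ^ (k+1) →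
      (sePi k r - δ) * n ^ r ≤ seX P r →
      ∃ c : Fin n → Fin k,
        ∑ v, ∑ w, (if P.Adj w v ∧ c w = c v then (1:ℝ) else 0) ≤ ε * n^2 ∧
        (1 - 1 / (k:ℝ) - ε) * n ^ 2 ≤ seX P 2 := by
  obtain ⟨q, rfl⟩ : ∃ q, k = q + 1 := ⟨k - 1, by omega⟩
  set k := q + 1 with hkq
  have hkpos : (0:ℝ) < k := by rw [hkq]; positivity
  have hπ : 0 < sePi k k := sePi_pos (by omega) le_rfl
  have hπ' : (k:ℝ) * sePi k k = sePi k q := by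
    rw [show sePi k k = sePi k (q+1) from rfl, sePi_succ]
    have : (k:ℝ) = q + 1 := by rw [hkq]; push_cast; rfl
    field_simp
    rw [this]; ring
  set π := sePi k k with hπdef
  set ε1 := ε / 3 with hε1
  have hε1p : 0 < ε1 := by positivity
  obtain ⟨η, hη, hη1, hη2, hη3⟩ : ∃ η : ℝ, 0 < η ∧ η ≤ π / 2 ∧ ((k:ℝ)+1) * η ≤ ε1 * π / 4 ∧ η ≤ ε := by
    refine ⟨min (π/2) (min (ε1 * π / 4 / ((k:ℝ)+1)) ε), by positivity, min_le_left _ _, ?_, ?_⟩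
    · have := (min_le_right (π/2) (min (ε1 * π / 4 / ((k:ℝ)+1)) ε)).trans (min_le_left _ _)
      rw [le_div_iff₀ (by positivity)] at this
      linarith
    · exact (min_le_right _ _).trans (min_le_right _ _)
  obtain ⟨δ₀, hδ₀, hseq⟩ := se_seq k r hr hk η hη
  have hqk : (0:ℝ) < (q:ℝ) + k := by positivity
  refine ⟨min δ₀ (ε1 * π / 4 / ((q:ℝ) + k)), by positivity, fun n hn P hX1 hXr => ?_⟩
  have hn' : (0:ℝ) < n := by exact_mod_cast hn
  set δ := min δ₀ (ε1 * π / 4 / ((q:ℝ) + k)) with hδ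
  have hδ1 : δ ≤ δ₀ := min_le_left _ _
  have hδ2 : ((q:ℝ) + k) * δ ≤ ε1 * π / 4 := by
    have : δ ≤ ε1 * π / 4 / ((q:ℝ) + k) := min_le_right _ _
    rw [le_div_iff₀ hqk] at this
    linarith
  let h : ℕ → ℝ := fun s => seX P s / (n:ℝ) ^ s
  have hh : ∀ s, seX P s = h s * (n:ℝ)^s := by
    intro s; simp only [h]; field_simp
  have hall := hseq h (fun s => div_nonneg (seX_nonneg P s) (by positivity))
    (fun s => by
      simp only [h]; rw [div_le_one (by positivity)]; exact seX_le_pow P s)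
    (by simp [h, seX_zero])
    (by
      intro s
      have h1 := se_cauchy P s
      have h2 := mul_le_mul_of_nonneg_left (se_mm P s) (seX_nonneg P s)
      have h3 : ((s:ℝ)+1) * seX P (s+1)^2 ≤ seX P s * (n * seX P (s+1) + s * seX P (s+2)) := by
        have : (0:ℝ) ≤ (s:ℝ)+1 := by positivity
        have := mul_le_mul_of_nonneg_left h1 this
        linarith
      rw [hh s, hh (s+1), hh (s+2)] at h3
      have hp : (0:ℝ) < ((n:ℝ)^(s+1))^2 := by positivity
      apply le_of_mul_le_mul_right _ hp
      calc _ = ((s:ℝ)+1) * (h (s+1) * (n:ℝ)^(s+1))^2 := by ring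
        _ ≤ _ := h3
        _ = _ := by ring)
    (by
      simp only [h]; rw [div_le_iff₀ (by positivity)]
      exact hX1.trans (mul_le_mul_of_nonneg_right hδ1 (by positivity)))
    (by
      simp only [h]; rw [le_div_iff₀ (by positivity)]
      refine le_trans (mul_le_mul_of_nonneg_right ?_ (by positivity)) hXr
      linarith)
  have hhk := hall k le_rfl
  have hhq := hall q (by omega)
  have hh2 := hall 2 (by omega)
  have hkey := se_real_aux k q hkq ε1 η π (h k) (h q) (h (k+1)) (seQ P q / (n:ℝ)^(q+2)) (sePi k q)
    hη hπ hπ' hhk hhq hη1 hη2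
    (by
      have h1 := se_cauchy P q
      rw [← hkq, hh k, hh q] at h1
      have hp : (0:ℝ) < ((n:ℝ)^k)^2 := by positivity
      apply le_of_mul_le_mul_right _ hp
      calc _ = (h k * (n:ℝ)^k)^2 := by ring
        _ ≤ _ := h1
        _ = _ := by rw [hkq]; field_simp; ring)
    (by
      refine le_trans (mul_le_mul_of_nonneg_left ?_ hqk.le) hδ2
      simp only [h]; rw [div_le_iff₀ (by positivity)]; exact hX1)
  have hXk : 0 < seX P (q+1) := by
    rw [hh]
    rw [abs_lt] at hhk
    have : 0 < h (q+1) := by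
      show 0 < h k
      linarith
    positivity
  obtain ⟨B, hB⟩ := se_exists_B P q ε1 hXk (by
    have hp : (0:ℝ) ≤ (n:ℝ)^(q+3) := by positivity
    have := mul_le_mul_of_nonneg_right hkey hp
    have hQ : seQ P q = seQ P q / (n:ℝ)^(q+2) * (n:ℝ)^(q+2) := by field_simp
    have hkc : (k:ℝ) = q + 1 := by rw [hkq]; push_cast; rfl
    rw [hkc] at this
    rw [hQ, hh (q+1), hh (q+2)]
    set S := seQ P q / (n:ℝ)^(q+2)
    calc _ = (h (q+1) - (q+1) * S + ((q:ℝ) + (q+1)) * h (q+2)) * (n:ℝ)^(q+3) := by ring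
      _ ≤ _ := this
      _ = _ := by rw [hkq]; ring)
  obtain ⟨c, hc⟩ := se_colour P q ε1 hn B hB
  refine ⟨c, hc.trans (le_of_eq (by rw [hε1]; ring)), ?_⟩
  rw [hh 2]
  apply mul_le_mul_of_nonneg_right _ (by positivity)
  have : sePi k 2 = 1 - 1 / (k:ℝ) := by simp [sePi, Finset.prod_range_succ]
  rw [this, abs_lt] at hh2
  linarith
end SE2


section SE3
open Classical

theorem se_perm {n k : ℕ} (c τ : Fin n → Fin k) : ∃ σ : Fin n ≃ Fin n,
    (univ.filter (fun x => τ (σ x) ≠ c x)).card ≤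
      ∑ i, ((univ.filter (fun x => c x = i)).card - (univ.filter (fun x => τ x = i)).card) := by
  have h1 : ∀ i : Fin k, ∃ A : Finset (Fin n), A ⊆ univ.filter (fun x => c x = i) ∧
      A.card = min (univ.filter (fun x => c x = i)).card (univ.filter (fun x => τ x = i)).card :=
    fun i => Finset.exists_subset_card_eq (min_le_left _ _)
  choose A hA hAc using h1
  have h2 : ∀ i : Fin k, ∃ f : Fin n → Fin n, (∀ x ∈ A i, τ (f x) = i) ∧ Set.InjOn f (A i) := by
    intro i
    rcases (A i).eq_empty_or_nonempty with he | hne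
    · exact ⟨id, by simp [he], by simp [he]⟩
    · have hle : (A i).card ≤ (univ.filter (fun x => τ x = i)).card := by
        rw [hAc]; exact min_le_right _ _
      obtain ⟨C, hC, hCc⟩ := Finset.exists_subset_card_eq hle
      let e := Finset.equivOfCardEq hCc.symm
      refine ⟨fun x => if hx : x ∈ A i then (e ⟨x, hx⟩ : Fin n) else x, ?_, ?_⟩
      · intro x hx
        simp only [dif_pos hx]
        have := hC (e ⟨x, hx⟩).2
        simpa using this
      · intro x hx y hy hxy
        have hx' : x ∈ A i := hx
        have hy' : y ∈ A i := hy
        simp only [dif_pos hx', dif_pos hy'] at hxy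
        have := e.injective (Subtype.ext hxy)
        simpa using this
  choose f hf hfi using h2
  let S : Finset (Fin n) := univ.filter (fun x => x ∈ A (c x))
  obtain ⟨g, hg⟩ := Finset.exists_equiv_extend_of_card_eq (α := Fin n) (t := (univ : Finset (Fin n)))
    (by simp) (s := S) (f := fun x => f (c x) x) (by simp) (by
      intro x hx y hy hxy
      have hx' : x ∈ A (c x) := by simpa [S] using hx
      have hy' : y ∈ A (c y) := by simpa [S] using hy
      have e1 := hf _ x hx'
      have e2 := hf _ y hy'
      have hxy' : f (c x) x = f (c y) y := hxy
      have e3 : c x = c y := by rw [← e1, ← e2, hxy']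
      rw [← e3] at hxy' hy'
      exact hfi _ hx' hy' hxy')
  refine ⟨g.trans (Equiv.subtypeUnivEquiv (by simp)), ?_⟩
  have hsub : univ.filter (fun x => τ ((g.trans (Equiv.subtypeUnivEquiv (by simp))) x) ≠ c x) ⊆
      univ.biUnion (fun i => (univ.filter (fun x => c x = i)) \ A i) := by
    intro x hx
    simp only [mem_filter, mem_univ, true_and] at hx
    simp only [mem_biUnion, mem_univ, true_and, mem_sdiff, mem_filter]
    refine ⟨c x, rfl, fun hxA => hx ?_⟩
    have := hg x (by simpa [S] using hxA)
    simp only [Equiv.trans_apply, Equiv.subtypeUnivEquiv_apply]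
    rw [this]
    exact hf _ x hxA
  refine (Finset.card_le_card hsub).trans (Finset.card_biUnion_le.trans ?_)
  apply Finset.sum_le_sum
  intro i _
  rw [Finset.card_sdiff_of_subset (hA i), hAc]
  omega

theorem se_residue {n k : ℕ} (hk : 0 < k) (i : Fin k) :
    n / k ≤ (univ.filter (fun x : Fin n => (⟨(x:ℕ) % k, Nat.mod_lt _ hk⟩ : Fin k) = i)).card := by
  have hlt : ∀ j : Fin (n / k), (i:ℕ) + k * j < n := by
    intro j
    have h1 : k * ((j:ℕ) + 1) ≤ k * (n / k) := Nat.mul_le_mul_left _ j.2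
    have h2 := Nat.mul_div_le n k
    have h3 := i.2
    rw [Nat.mul_add] at h1
    omega
  have : (univ : Finset (Fin (n/k))).card = n / k := by simp
  rw [← this]
  apply Finset.card_le_card_of_injOn (fun j : Fin (n/k) => (⟨i + k * j, hlt j⟩ : Fin n))
  · intro j _
    simp only [coe_filter, mem_univ, true_and, Set.mem_ofPred_eq]
    ext
    simp [Nat.mod_eq_of_lt i.2]
  · intro j _ j' _ h
    simp only [Fin.mk.injEq, Nat.add_left_cancel_iff] at h
    exact Fin.ext (Nat.eq_of_mul_eq_mul_left hk h)

theorem se_sum_sq {n k : ℕ} (c : Fin n → Fin k) :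
    ∑ v, ∑ w, (if c w = c v then (1:ℝ) else 0) =
      ∑ i, ((univ.filter (fun x => c x = i)).card : ℝ)^2 := by
  have h1 : ∀ v, ∑ w, (if c w = c v then (1:ℝ) else 0) = ((univ.filter (fun x => c x = c v)).card : ℝ) := by
    intro v; simp
  simp only [h1]
  rw [← Finset.sum_fiberwise (s := univ) (g := c)]
  apply Finset.sum_congr rfl
  intro i _
  rw [Finset.sum_congr rfl (g := fun _ => ((univ.filter (fun x => c x = i)).card : ℝ))]
  · simp [sq]
  · intro v hv
    simp only [mem_filter, mem_univ, true_and] at hv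
    rw [hv]

theorem seX_two {n : ℕ} (P : SimpleGraph (Fin n)) :
    seX P 2 = ∑ v, ∑ w, (if P.Adj w v then (1:ℝ) else 0) := by
  rw [seX, ← (finTwoArrowEquiv (Fin n)).symm.sum_comp, Fintype.sum_prod_type]
  apply Finset.sum_congr rfl; intro v _
  apply Finset.sum_congr rfl; intro w _
  congr 1
  simp only [eq_iff_iff]
  constructor
  · intro h
    simpa using h 1 0 (by decide)
  · intro h i j hij
    fin_cases i <;> fin_cases j <;> simp_all [SimpleGraph.adj_comm]

theorem se_balance {n k : ℕ} (hk : 0 < k) (P : SimpleGraph (Fin n)) (c : Fin n → Fin k) (ε : ℝ)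
    (hbad : ∑ v, ∑ w, (if P.Adj w v ∧ c w = c v then (1:ℝ) else 0) ≤ ε * n^2)
    (hX : (1 - 1 / (k:ℝ) - ε) * n ^ 2 ≤ seX P 2) (i : Fin k) :
    (((univ.filter (fun x => c x = i)).card : ℝ) - n / k)^2 ≤ 2 * ε * n^2 := by
  have hk' : (0:ℝ) < k := by exact_mod_cast hk
  set a : Fin k → ℝ := fun i => ((univ.filter (fun x => c x = i)).card : ℝ) with ha
  have hsum : ∑ i, a i = n := by
    have := Finset.card_eq_sum_card_fiberwise (s := (univ : Finset (Fin n)))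
      (t := (univ : Finset (Fin k))) (f := c) (by intro x _; simp)
    simp only [Finset.card_univ, Fintype.card_fin] at this
    simp only [ha]
    exact_mod_cast this.symm
  have h1 : seX P 2 ≤ ∑ v : Fin n, ∑ w : Fin n, ((if P.Adj w v ∧ c w = c v then (1:ℝ) else 0) + 1
      - (if c w = c v then (1:ℝ) else 0)) := by
    rw [seX_two]
    apply Finset.sum_le_sum; intro v _
    apply Finset.sum_le_sum; intro w _
    by_cases h1 : P.Adj w v <;> by_cases h2 : c w = c v <;> simp [h1, h2]
  simp only [Finset.sum_sub_distrib, Finset.sum_add_distrib] at h1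
  rw [se_sum_sq c] at h1
  have h2 : ∑ v : Fin n, ∑ w : Fin n, (1:ℝ) = (n:ℝ)^2 := by simp [sq]
  rw [h2] at h1
  have h3 : ∑ j, (a j - n / k)^2 = ∑ j, a j ^2 - (n:ℝ)^2 / k := by
    have : ∀ j, (a j - n / k)^2 = a j ^ 2 - 2 * (n / k) * a j + (n/k)^2 := fun j => by ring
    simp only [this, Finset.sum_add_distrib, Finset.sum_sub_distrib, ← Finset.mul_sum, hsum]
    simp only [Finset.sum_const, Finset.card_univ, Fintype.card_fin, nsmul_eq_mul]
    field_simp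
    ring
  have h4 : (a i - n / k)^2 ≤ ∑ j, (a j - n / k)^2 :=
    Finset.single_le_sum (f := fun j => (a j - n / k)^2) (fun j _ => sq_nonneg _) (Finset.mem_univ i)
  have h5 : (1 - 1 / (k:ℝ) - ε) * n ^ 2 = (n:ℝ)^2 - (n:ℝ)^2/k - ε * n^2 := by ring
  have h6 : ∑ j, a j ^ 2 = ∑ i, ((univ.filter (fun x => c x = i)).card : ℝ)^2 := rfl
  show (a i - n / k)^2 ≤ _
  linarith

/-- greedy choice of disjoint tuples -/
theorem se_greedy {ι : Type*} [Fintype ι] [DecidableEq ι] {n d : ℕ}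
    (Z : ι → Finset (Fin d → Fin n)) (M0 : Finset (Fin n))
    (hav : ∀ e, ∀ M : Finset (Fin n), M.card ≤ M0.card + Fintype.card ι * d →
      ∃ z ∈ Z e, ∀ i, z i ∉ M) :
    ∃ z : ι → Fin d → Fin n, (∀ e, z e ∈ Z e ∧ ∀ i, z e i ∉ M0) ∧
      ∀ e e', e ≠ e' → ∀ i j, z e i ≠ z e' j := by
  have hex : ∀ e, ∃ z, z ∈ Z e := fun e => by
    obtain ⟨z, hz, _⟩ := hav e ∅ (by simp)
    exact ⟨z, hz⟩
  choose z0 hz0 using hex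
  have key : ∀ E : Finset ι, ∃ z : ι → Fin d → Fin n, (∀ e ∈ E, z e ∈ Z e ∧ ∀ i, z e i ∉ M0) ∧
      ∀ e ∈ E, ∀ e' ∈ E, e ≠ e' → ∀ i j, z e i ≠ z e' j := by
    intro E
    induction E using Finset.induction_on with
    | empty => exact ⟨z0, by simp, by simp⟩
    | insert a E haE ih =>
      obtain ⟨z, h1, h2⟩ := ih
      obtain ⟨w, hw, hwM⟩ := hav a (M0 ∪ E.biUnion (fun e => univ.image (z e))) (by
        refine (Finset.card_union_le _ _).trans (Nat.add_le_add_left ?_ _)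
        refine Finset.card_biUnion_le.trans ?_
        calc _ ≤ ∑ e ∈ E, d := Finset.sum_le_sum (fun e _ => Finset.card_image_le.trans (by simp))
          _ = E.card * d := by simp
          _ ≤ _ := Nat.mul_le_mul_right _ (Finset.card_le_univ _))
      have hwz : ∀ e ∈ E, ∀ i j, w i ≠ z e j := by
        intro e he i j heq
        apply hwM i
        simp only [mem_union, mem_biUnion, mem_image, mem_univ, true_and]
        exact Or.inr ⟨e, he, j, heq.symm⟩
      have hne : ∀ e ∈ E, e ≠ a := fun e he h => haE (h ▸ he)
      refine ⟨Function.update z a w, ?_, ?_⟩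
      · intro e he
        rcases Finset.mem_insert.1 he with rfl | he
        · simp only [Function.update_self]
          exact ⟨hw, fun i hi => hwM i (Finset.mem_union_left _ hi)⟩
        · rw [Function.update_of_ne (hne e he)]; exact h1 e he
      · intro e he e' he' hee
        rcases Finset.mem_insert.1 he with hea | heE
        · rcases Finset.mem_insert.1 he' with hea' | heE'
          · exact absurd (hea.trans hea'.symm) hee
          · rw [hea, Function.update_self, Function.update_of_ne (hne e' heE')]
            exact hwz e' heE'
        · rcases Finset.mem_insert.1 he' with hea' | heE'
          · rw [hea', Function.update_self, Function.update_of_ne (hne e heE)]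
            exact fun i j h => hwz e heE j i h.symm
          · rw [Function.update_of_ne (hne e heE), Function.update_of_ne (hne e' heE')]
            exact h2 e heE e' heE' hee
  obtain ⟨z, h1, h2⟩ := key univ
  exact ⟨z, fun e => h1 e (by simp), fun e e' => h2 e (by simp) e' (by simp)⟩

theorem se_card_hit {n d : ℕ} (i : Fin d) (v : Fin n) :
    n * (univ.filter (fun z : Fin d → Fin n => z i = v)).card ≤ n ^ d := by
  have : (univ : Finset (Fin n)).card * (univ.filter (fun z : Fin d → Fin n => z i = v)).card ≤
      (univ : Finset (Fin d → Fin n)).card := by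
    rw [← Finset.card_product]
    apply Finset.card_le_card_of_injOn (fun q => Function.update q.2 i q.1)
    · intro q _; simp
    · rintro ⟨w, a⟩ ha ⟨w', a'⟩ ha' hq
      simp only [coe_product, coe_univ, coe_filter, mem_univ, true_and, Set.mem_prod,
        Set.mem_univ, Set.mem_ofPred_eq] at ha ha' hq
      have h1 := congrFun hq i
      simp only [Function.update_self] at h1
      have h3 : a = a' := by
        ext j
        by_cases hj : j = i
        · subst hj; rw [ha, ha']
        · have := congrFun hq j
          simp only [Function.update_of_ne hj] at this
          rw [this]
      rw [h1, h3]
  simpa using this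

theorem se_avoid {n d : ℕ} (Z : Finset (Fin d → Fin n)) (γ : ℝ) (hn : 0 < n)
    (hZ : γ * (n:ℝ)^d ≤ Z.card)
    (M : Finset (Fin n)) (hM : (d:ℝ) * M.card < γ * n) : ∃ z ∈ Z, ∀ i, z i ∉ M := by
  by_contra hc
  push Not at hc
  have hsub : Z ⊆ (univ : Finset (Fin d)).biUnion (fun i => M.biUnion (fun v =>
      univ.filter (fun z : Fin d → Fin n => z i = v))) := by
    intro z hz
    obtain ⟨i, hi⟩ := hc z hz
    simp only [mem_biUnion, mem_univ, true_and, mem_filter]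
    exact ⟨i, z i, hi, rfl⟩
  have h1 : n * Z.card ≤ d * (M.card * n ^ d) := by
    calc n * Z.card ≤ n * ∑ i : Fin d, ∑ v ∈ M, (univ.filter (fun z : Fin d → Fin n => z i = v)).card := by
          apply Nat.mul_le_mul_left
          refine (Finset.card_le_card hsub).trans (Finset.card_biUnion_le.trans ?_)
          exact Finset.sum_le_sum (fun i _ => Finset.card_biUnion_le)
      _ = ∑ i : Fin d, ∑ v ∈ M, n * (univ.filter (fun z : Fin d → Fin n => z i = v)).card := by
          simp only [Finset.mul_sum]
      _ ≤ ∑ i : Fin d, ∑ v ∈ M, n ^ d :=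
          Finset.sum_le_sum (fun i _ => Finset.sum_le_sum (fun v _ => se_card_hit i v))
      _ = _ := by simp
  have h1' : (n:ℝ) * Z.card ≤ d * (M.card * (n:ℝ) ^ d) := by exact_mod_cast h1
  have hn' : (0:ℝ) < n := by exact_mod_cast hn
  have hp : (0:ℝ) < (n:ℝ)^d := by positivity
  have h2 := mul_le_mul_of_nonneg_left hZ hn'.le
  have h3 := mul_lt_mul_of_pos_right hM hp
  nlinarith

end SE3


theorem se_sym2 {α : Type*} [Fintype α] [DecidableEq α] (u v : α) :
    sym2ToFinset s(u, v) = {u, v} := by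
  ext x; simp [sym2ToFinset]

theorem se_embed {α : Type*} [Fintype α] [DecidableEq α] (r : ℕ) (hr : 2 ≤ r)
    (F : SimpleGraph α) [DecidableRel F.Adj] {n : ℕ} (hn : 0 < n) (G : Finset (Finset (Fin n)))
    (hG : IsRGraph r G) (γ : ℝ) (hγ : 0 < γ) (f : α → Fin n) (hf : Function.Injective f)
    (hheavy : ∀ u v, F.Adj u v → γ * (n:ℝ)^(r-2) ≤
      (univ.filter (fun z : Fin (r-2) → Fin n => ({f u, f v} : Finset (Fin n)) ∪ univ.image z ∈ G)).card)
    (hbig : ((r-2 : ℕ):ℝ) * ((Fintype.card α + Fintype.card F.edgeFinset * (r-2) : ℕ):ℝ) < γ * n) :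
    ContainsCopy (expansion r F) G := by
  let Z : F.edgeFinset → Finset (Fin (r-2) → Fin n) := fun e =>
    univ.filter (fun z => (sym2ToFinset e.1).image f ∪ univ.image z ∈ G)
  have hZ : ∀ e, γ * (n:ℝ)^(r-2) ≤ (Z e).card := by
    rintro ⟨e, he⟩
    induction e using Sym2.ind with
    | _ u v =>
      have := hheavy u v (by simpa using he)
      simp only [Z, se_sym2, Finset.image_insert, Finset.image_singleton]
      exact this
  obtain ⟨z, hz1, hz2⟩ := se_greedy Z (univ.image f) (by
    intro e M hM
    apply se_avoid (Z e) γ hn (hZ e) M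
    refine lt_of_le_of_lt ?_ hbig
    apply mul_le_mul_of_nonneg_left _ (by positivity)
    have : (univ.image f).card ≤ Fintype.card α := Finset.card_image_le
    exact_mod_cast hM.trans (by omega))
  have hzG : ∀ e, (sym2ToFinset e.1).image f ∪ univ.image (z e) ∈ G := by
    intro e
    have := (hz1 e).1
    simpa [Z] using this
  have hzinj : ∀ e, Function.Injective (z e) := by
    intro e
    have h1 := hG _ (hzG e)
    have h2 := Finset.card_union_le ((sym2ToFinset e.1).image f) (univ.image (z e))
    have h3 : ((sym2ToFinset e.1).image f).card ≤ 2 := by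
      refine Finset.card_image_le.trans ?_
      obtain ⟨e, he⟩ := e
      induction e using Sym2.ind with
      | _ u v => simp only [se_sym2]; exact Finset.card_le_two
    have h4 : (univ.image (z e)).card ≤ (univ : Finset (Fin (r-2))).card := Finset.card_image_le
    have h5 : (univ.image (z e)).card = (univ : Finset (Fin (r-2))).card := by
      simp only [Finset.card_univ, Fintype.card_fin] at h4 ⊢
      omega
    have := Finset.card_image_iff.1 h5
    intro i j hij
    exact this (by simp) (by simp) hij
  refine ⟨Sum.elim f (fun q => z q.1 q.2), ?_, ?_⟩
  · rintro (a | ⟨e, i⟩) (b | ⟨e', j⟩) h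
    · simp only [Sum.elim_inl] at h; rw [hf h]
    · simp only [Sum.elim_inl, Sum.elim_inr] at h
      exact absurd (by rw [← h]; simp) ((hz1 e').2 j)
    · simp only [Sum.elim_inl, Sum.elim_inr] at h
      exact absurd (by rw [h]; simp) ((hz1 e).2 i)
    · simp only [Sum.elim_inr] at h
      by_cases hee : e = e'
      · subst hee; rw [hzinj e h]
      · exact absurd h (hz2 e e' hee i j)
  · intro E hE
    simp only [expansion, mem_image, mem_attach, true_and] at hE
    obtain ⟨e, rfl⟩ := hE
    rw [Finset.image_union, Finset.image_image, Finset.image_image]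
    exact hzG e

theorem se_desc (k s : ℕ) (hk : 0 < k) (hs : s ≤ k) :
    (k.descFactorial s : ℝ) = sePi k s * (k:ℝ)^s := by
  have hk' : (0:ℝ) < k := by exact_mod_cast hk
  induction s with
  | zero => simp [sePi]
  | succ s ih =>
    rw [Nat.descFactorial_succ, sePi_succ, Nat.cast_mul, ih (by omega), Nat.cast_sub (by omega)]
    field_simp
    ring

theorem se_turan_card (r n k : ℕ) (hk : 0 < k) :
    k.descFactorial r * (n / k)^r ≤ turanNum r n k * r.factorial := by
  classical
  rw [turanNum, ← se_card_tuples r (turanGraph r n k) (by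
    intro e he; simp only [turanGraph, mem_filter, mem_powersetCard] at he; exact he.1.2)]
  have : ((univ : Finset (Fin r ↪ Fin k)) ×ˢ (univ : Finset (Fin r → Fin (n/k)))).card =
      k.descFactorial r * (n / k)^r := by
    rw [Finset.card_product]; simp [Fintype.card_embedding_eq]
  rw [← this]
  have hlt : ∀ (i : Fin k) (j : Fin (n / k)), (i:ℕ) + k * j < n := by
    intro i j
    have h1 : k * ((j:ℕ) + 1) ≤ k * (n / k) := Nat.mul_le_mul_left _ j.2
    have h2 := Nat.mul_div_le n k
    have h3 := i.2
    rw [Nat.mul_add] at h1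
    omega
  apply Finset.card_le_card_of_injOn
    (fun q : (Fin r ↪ Fin k) × (Fin r → Fin (n/k)) => fun i => (⟨q.1 i + k * q.2 i, hlt _ _⟩ : Fin n))
  · rintro ⟨φ, a⟩ _
    have hmod : ∀ i, ((φ i : ℕ) + k * a i) % k = φ i := by
      intro i; simp [Nat.mod_eq_of_lt (φ i).2]
    have hres : ∀ i j, ((φ i : ℕ) + k * a i) % k = ((φ j : ℕ) + k * a j) % k → i = j := by
      intro i j h
      rw [hmod, hmod] at h
      exact φ.injective (Fin.ext h)
    simp only [coe_filter, mem_univ, true_and, Set.mem_ofPred_eq, turanGraph, mem_filter,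
      mem_powersetCard, subset_univ]
    refine ⟨?_, ?_⟩
    · rw [Finset.card_image_of_injective]
      · simp
      · intro i j h
        simp only [Fin.mk.injEq] at h
        exact hres i j (by rw [h])
    · intro u hu v hv huv
      simp only [mem_image, mem_univ, true_and] at hu hv
      obtain ⟨i, rfl⟩ := hu
      obtain ⟨j, rfl⟩ := hv
      rw [hres i j huv]
  · rintro ⟨φ, a⟩ _ ⟨ψ, b⟩ _ h
    have h1 : ∀ i, (φ i : ℕ) + k * a i = ψ i + k * b i := fun i => congrArg Fin.val (congrFun h i)
    have h2 : ∀ i, φ i = ψ i := by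
      intro i
      have := congrArg (· % k) (h1 i)
      simp only [Nat.add_mul_mod_self_left, Nat.mod_eq_of_lt (φ i).2, Nat.mod_eq_of_lt (ψ i).2] at this
      exact Fin.ext this
    have h3 : ∀ i, a i = b i := by
      intro i
      have := h1 i
      rw [h2 i] at this
      exact Fin.ext (Nat.eq_of_mul_eq_mul_left hk (Nat.add_left_cancel this))
    have e1 : φ = ψ := by ext i; rw [h2 i]
    have e2 : a = b := funext h3
    rw [e1, e2]

theorem se_turan_lower (r k : ℕ) (hk : 0 < k) (hrk : r ≤ k) (δ : ℝ) (hδ : 0 < δ) :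
    ∃ n₀ : ℕ, ∀ n, n₀ ≤ n → (sePi k r - δ) * (n:ℝ)^r ≤ turanNum r n k * r.factorial := by
  obtain ⟨m, hm⟩ := exists_nat_gt ((r:ℝ) * k / δ)
  refine ⟨max (m+1) k, fun n hn => ?_⟩
  have hnm : m + 1 ≤ n := (le_max_left _ _).trans hn
  have hnk : k ≤ n := (le_max_right _ _).trans hn
  have hn' : (0:ℝ) < n := by exact_mod_cast (by omega : 0 < n)
  have hk' : (0:ℝ) < k := by exact_mod_cast hk
  have hsmall : (r:ℝ) * k / n ≤ δ := by
    rw [div_lt_iff₀ hδ] at hm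
    rw [div_le_iff₀ hn']
    have : (m:ℝ) ≤ n := by exact_mod_cast (by omega : m ≤ n)
    nlinarith
  have h1 : (k.descFactorial r : ℝ) * ((n / k : ℕ):ℝ)^r ≤ turanNum r n k * r.factorial := by
    exact_mod_cast se_turan_card r n k hk
  refine le_trans ?_ h1
  rw [se_desc k r hk hrk, mul_assoc, ← mul_pow]
  have h2 : (n:ℝ) - k ≤ k * ((n/k : ℕ):ℝ) := by
    have := Nat.div_add_mod n k
    have h3 := Nat.mod_lt n hk
    have : n ≤ k * (n/k) + k := by omega
    have : (n:ℝ) ≤ k * ((n/k : ℕ):ℝ) + k := by exact_mod_cast this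
    linarith
  have hnk' : (k:ℝ) ≤ n := by exact_mod_cast hnk
  have h3 : ((n:ℝ) - k)^r ≤ (k * ((n/k : ℕ):ℝ))^r := pow_le_pow_left₀ (by linarith) h2 r
  have h4 : (1 - (r:ℝ) * k / n) * (n:ℝ)^r ≤ ((n:ℝ) - k)^r := by
    have hb := one_add_mul_le_pow (a := -((k:ℝ)/n)) (by
      have : (k:ℝ)/n ≤ 1 := by rw [div_le_one hn']; exact hnk'
      linarith) r
    calc _ = (1 + (r:ℝ) * -((k:ℝ)/n)) * (n:ℝ)^r := by ring
      _ ≤ (1 + -((k:ℝ)/n))^r * (n:ℝ)^r := mul_le_mul_of_nonneg_right hb (by positivity)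
      _ = _ := by rw [← mul_pow]; congr 1; field_simp; ring
  have hπ0 : 0 < sePi k r := sePi_pos hk hrk
  have hπ1 : sePi k r ≤ 1 := by
    apply Finset.prod_le_one
    · intro i hi
      have : (i:ℝ) ≤ k := by
        have : i < r := by simpa using hi
        exact_mod_cast (by omega : i ≤ k)
      rw [sub_nonneg, div_le_one hk']; exact this
    · intro i _
      have : (0:ℝ) ≤ (i:ℝ)/k := by positivity
      linarith
  calc (sePi k r - δ) * (n:ℝ)^r ≤ (sePi k r * (1 - (r:ℝ) * k / n)) * (n:ℝ)^r := by
        apply mul_le_mul_of_nonneg_right _ (by positivity)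
        have : 0 ≤ (r:ℝ) * k / n := by positivity
        nlinarith
    _ = sePi k r * ((1 - (r:ℝ) * k / n) * (n:ℝ)^r) := by ring
    _ ≤ _ := mul_le_mul_of_nonneg_left (h4.trans h3) hπ0.le

section SE4
open Classical

/-- heavy pairs -/
noncomputable def seHeavy {n : ℕ} (r : ℕ) (G : Finset (Finset (Fin n))) (γ : ℝ) :
    SimpleGraph (Fin n) where
  Adj u v := u ≠ v ∧ γ * (n:ℝ)^(r-2) ≤
      (univ.filter (fun z : Fin (r-2) → Fin n => ({u, v} : Finset (Fin n)) ∪ univ.image z ∈ G)).card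
  symm := ⟨fun u v h => ⟨h.1.symm, by rw [Finset.pair_comm]; exact h.2⟩⟩
  loopless := ⟨fun u h => h.1 rfl⟩

/-- edges with a light pair -/
noncomputable def seLight {n : ℕ} (G : Finset (Finset (Fin n))) (P : SimpleGraph (Fin n)) :
    Finset (Finset (Fin n)) :=
  G.filter (fun e => ∃ u ∈ e, ∃ v ∈ e, u ≠ v ∧ ¬ P.Adj u v)

theorem se_light_card {n : ℕ} (r : ℕ) (hr : 2 ≤ r) (G : Finset (Finset (Fin n)))
    (hG : IsRGraph r G) (γ : ℝ) (hγ : 0 < γ) :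
    ((seLight G (seHeavy r G γ)).card : ℝ) ≤ γ * (n:ℝ)^r := by
  let Q : Finset (Fin n × Fin n) := univ.filter (fun q => q.1 ≠ q.2 ∧ ¬ (seHeavy r G γ).Adj q.1 q.2)
  have hsub : seLight G (seHeavy r G γ) ⊆ Q.biUnion (fun q =>
      G.filter (fun e => ({q.1, q.2} : Finset (Fin n)) ⊆ e)) := by
    intro e he
    simp only [seLight, mem_filter] at he
    obtain ⟨heG, u, hu, v, hv, huv, hl⟩ := he
    simp only [mem_biUnion, Q, mem_filter, mem_univ, true_and]
    refine ⟨(u, v), ⟨huv, hl⟩, heG, ?_⟩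
    intro x hx
    simp only [mem_insert, mem_singleton] at hx
    rcases hx with rfl | rfl <;> assumption
  have h1 : ∀ q ∈ Q, ((G.filter (fun e => ({q.1, q.2} : Finset (Fin n)) ⊆ e)).card : ℝ)
      ≤ γ * (n:ℝ)^(r-2) := by
    intro q hq
    simp only [Q, mem_filter, mem_univ, true_and] at hq
    have h2 := se_card_link r 2 (G.filter (fun e => ({q.1, q.2} : Finset (Fin n)) ⊆ e))
      (fun e he => hG e (Finset.mem_filter.1 he).1) {q.1, q.2} (Finset.card_pair hq.1)
      (fun e he => (Finset.mem_filter.1 he).2)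
    have h3 : ¬ (γ * (n:ℝ)^(r-2) ≤ (univ.filter (fun z : Fin (r-2) → Fin n =>
        ({q.1, q.2} : Finset (Fin n)) ∪ univ.image z ∈ G)).card) := fun h => hq.2 ⟨hq.1, h⟩
    push Not at h3
    refine le_trans ?_ h3.le
    norm_cast
    refine h2.trans (Finset.card_le_card ?_)
    intro z hz
    simp only [mem_filter, mem_univ, true_and] at hz ⊢
    exact hz.1
  calc ((seLight G (seHeavy r G γ)).card : ℝ)
      ≤ ∑ q ∈ Q, ((G.filter (fun e => ({q.1, q.2} : Finset (Fin n)) ⊆ e)).card : ℝ) := by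
        exact_mod_cast (Finset.card_le_card hsub).trans Finset.card_biUnion_le
    _ ≤ ∑ q ∈ Q, γ * (n:ℝ)^(r-2) := Finset.sum_le_sum h1
    _ = Q.card * (γ * (n:ℝ)^(r-2)) := by simp
    _ ≤ (n:ℝ)^2 * (γ * (n:ℝ)^(r-2)) := by
        apply mul_le_mul_of_nonneg_right _ (by positivity)
        have : Q.card ≤ n^2 := (Finset.card_le_univ _).trans (by simp [sq])
        exact_mod_cast this
    _ = γ * (n:ℝ)^r := by
        obtain ⟨m, rfl⟩ : ∃ m, r = m + 2 := ⟨r - 2, by omega⟩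
        simp only [Nat.add_sub_cancel]; ring

theorem se_X_lower {n : ℕ} (r : ℕ) (G : Finset (Finset (Fin n)))
    (hG : IsRGraph r G) (P : SimpleGraph (Fin n)) :
    ((G.card : ℝ) - (seLight G P).card) * r.factorial ≤ seX P r := by
  have hsub : seLight G P ⊆ G := Finset.filter_subset _ _
  have h1 := se_card_tuples r (G \ seLight G P) (fun e he => hG e (Finset.mem_sdiff.1 he).1)
  rw [Finset.card_sdiff_of_subset hsub] at h1
  have h2 : ((G.card : ℝ) - (seLight G P).card) * r.factorial =
      ((univ.filter (fun x : Fin r → Fin n => univ.image x ∈ G \ seLight G P)).card : ℝ) := by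
    rw [h1, Nat.cast_mul, Nat.cast_sub (Finset.card_le_card hsub)]
  rw [h2, seX, Finset.sum_boole]
  norm_cast
  apply Finset.card_le_card
  intro x hx
  simp only [mem_filter, mem_univ, true_and, mem_sdiff] at hx ⊢
  have hc := hG _ hx.1
  have hinj : Function.Injective x := by
    have : (univ.image x).card = (univ : Finset (Fin r)).card := by rw [hc]; simp
    have := Finset.card_image_iff.1 this
    intro i j hij
    exact this (by simp) (by simp) hij
  intro i j hij
  by_contra hadj
  apply hx.2
  simp only [seLight, mem_filter]
  exact ⟨hx.1, x i, by simp, x j, by simp, fun h => hij (hinj h), hadj⟩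

theorem se_count {n k : ℕ} (r : ℕ) (hr : 2 ≤ r) (G : Finset (Finset (Fin n)))
    (hG : IsRGraph r G) (P : SimpleGraph (Fin n)) (c τ : Fin n → Fin k) (σ : Fin n ≃ Fin n) :
    ((G.filter (fun e => ∃ u ∈ e, ∃ v ∈ e, u ≠ v ∧ τ (σ u) = τ (σ v))).card : ℝ) ≤
      (seLight G P).card
      + (∑ v, ∑ w, (if P.Adj w v ∧ c w = c v then (1:ℝ) else 0)) * (n:ℝ)^(r-2)
      + ((univ.filter (fun x => τ (σ x) ≠ c x)).card : ℝ) * (n:ℝ)^(r-1) := by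
  let Q : Finset (Fin n × Fin n) := univ.filter (fun q => P.Adj q.2 q.1 ∧ c q.2 = c q.1)
  let M : Finset (Fin n) := univ.filter (fun x => τ (σ x) ≠ c x)
  have hQ : ∑ v, ∑ w, (if P.Adj w v ∧ c w = c v then (1:ℝ) else 0) = Q.card := by
    rw [← Fintype.sum_prod_type' (f := fun v w => if P.Adj w v ∧ c w = c v then (1:ℝ) else 0),
      Finset.sum_boole]
  rw [hQ]
  have hsub : G.filter (fun e => ∃ u ∈ e, ∃ v ∈ e, u ≠ v ∧ τ (σ u) = τ (σ v)) ⊆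
      (seLight G P ∪ Q.biUnion (fun q => G.filter (fun e => ({q.1, q.2} : Finset (Fin n)) ⊆ e))) ∪
      M.biUnion (fun x => G.filter (fun e => ({x} : Finset (Fin n)) ⊆ e)) := by
    intro e he
    simp only [mem_filter] at he
    obtain ⟨heG, u, hu, v, hv, huv, hτ⟩ := he
    simp only [mem_union, mem_biUnion]
    by_cases hu' : τ (σ u) = c u
    · by_cases hv' : τ (σ v) = c v
      · left
        by_cases hadj : P.Adj v u
        · right
          refine ⟨(u, v), ?_, ?_⟩
          · simp only [Q, mem_filter, mem_univ, true_and]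
            exact ⟨hadj, by rw [← hu', ← hv', hτ]⟩
          · simp only [mem_filter]
            refine ⟨heG, ?_⟩
            intro x hx
            simp only [mem_insert, mem_singleton] at hx
            rcases hx with rfl | rfl <;> assumption
        · left
          simp only [seLight, mem_filter]
          exact ⟨heG, v, hv, u, hu, huv.symm, hadj⟩
      · right
        exact ⟨v, by simpa [M] using hv', by simp [heG, hv]⟩
    · right
      exact ⟨u, by simpa [M] using hu', by simp [heG, hu]⟩
  have h1 : (Q.biUnion (fun q => G.filter (fun e => ({q.1, q.2} : Finset (Fin n)) ⊆ e))).card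
      ≤ Q.card * n^(r-2) := by
    apply Finset.card_biUnion_le_card_mul
    intro q hq
    simp only [Q, mem_filter, mem_univ, true_and] at hq
    exact se_card_link' r 2 _ (fun e he => hG e (Finset.mem_filter.1 he).1) {q.1, q.2}
      (Finset.card_pair hq.1.ne') (fun e he => (Finset.mem_filter.1 he).2)
  have h2 : (M.biUnion (fun x => G.filter (fun e => ({x} : Finset (Fin n)) ⊆ e))).card
      ≤ M.card * n^(r-1) := by
    apply Finset.card_biUnion_le_card_mul
    intro x _
    exact se_card_link' r 1 _ (fun e he => hG e (Finset.mem_filter.1 he).1) {x}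
      (Finset.card_singleton x) (fun e he => (Finset.mem_filter.1 he).2)
  have h3 := (Finset.card_le_card hsub).trans ((Finset.card_union_le _ _).trans
    (Nat.add_le_add (Finset.card_union_le _ _) le_rfl))
  have h4 := h3.trans (Nat.add_le_add (Nat.add_le_add_left h1 _) h2)
  exact_mod_cast h4

end SE4

theorem se_close {n : ℕ} (r k : ℕ) (hk : 0 < k) (ε η N : ℝ) (G : Finset (Finset (Fin n)))
    (hG : IsRGraph r G) (σ : Fin n ≃ Fin n)
    (hN : ((G.filter (fun e => ∃ u ∈ e, ∃ v ∈ e, u ≠ v ∧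
      (⟨(σ u : ℕ) % k, Nat.mod_lt _ hk⟩ : Fin k) = ⟨(σ v : ℕ) % k, Nat.mod_lt _ hk⟩)).card : ℝ) ≤ N)
    (hGc : (turanNum r n k : ℝ) - η * (n.choose r) ≤ (G.card : ℝ))
    (htot : η * (n.choose r) + 2 * N ≤ ε * (n.choose r)) :
    EpsClose r n ε G (turanGraph r n k) := by
  refine ⟨σ, ?_⟩
  set H := G.image (fun e => e.image σ) with hH
  set T := turanGraph r n k with hT
  have hHc : H.card = G.card := Finset.card_image_of_injective _ (Finset.image_injective σ.injective)
  have h1 : ((H \ T).card : ℝ) ≤ N := by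
    refine le_trans ?_ hN
    norm_cast
    have hsub : H \ T ⊆ (G.filter (fun e => ∃ u ∈ e, ∃ v ∈ e, u ≠ v ∧
      (⟨(σ u : ℕ) % k, Nat.mod_lt _ hk⟩ : Fin k) = ⟨(σ v : ℕ) % k, Nat.mod_lt _ hk⟩)).image
        (fun e => e.image σ) := by
      intro x hx
      simp only [mem_sdiff, hH, mem_image] at hx
      obtain ⟨⟨e, he, rfl⟩, hnT⟩ := hx
      refine Finset.mem_image.2 ⟨e, ?_, rfl⟩
      simp only [mem_filter]
      refine ⟨he, ?_⟩
      by_contra hc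
      push Not at hc
      apply hnT
      simp only [hT, turanGraph, mem_filter, mem_powersetCard, subset_univ, true_and]
      refine ⟨by rw [Finset.card_image_of_injective _ σ.injective]; exact hG e he, ?_⟩
      intro u hu v hv huv
      simp only [mem_image] at hu hv
      obtain ⟨a, ha, rfl⟩ := hu
      obtain ⟨b, hb, rfl⟩ := hv
      by_contra hne
      exact hc a ha b hb (fun h => hne (by rw [h])) (Fin.ext huv)
    exact (Finset.card_le_card hsub).trans Finset.card_image_le
  have h2 : ((T \ H).card : ℝ) = T.card - H.card + (H \ T).card := by
    have e1 := Finset.card_sdiff_add_card_inter T H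
    have e2 := Finset.card_sdiff_add_card_inter H T
    rw [Finset.inter_comm] at e2
    have e1' : ((T \ H).card : ℝ) + (T ∩ H).card = T.card := by exact_mod_cast e1
    have e2' : ((H \ T).card : ℝ) + (T ∩ H).card = H.card := by exact_mod_cast e2
    linarith
  have h3 : (((H \ T) ∪ (T \ H)).card : ℝ) ≤ (H \ T).card + (T \ H).card := by
    exact_mod_cast Finset.card_union_le _ _
  have h4 : (T.card : ℝ) = turanNum r n k := rfl
  rw [hHc] at h2
  linarith


set_option maxHeartbeats 2000000 in
/-- **Theorem (Stability of `H_F^(r)`).**  Fix `ℓ > r ≥ 2` and a 2-graph `F` with `χ(F) = ℓ`.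
For every `ε > 0` there exist `n₀ > 0` and `η > 0` such that every `n`-vertex
`H_F^(r)`-free `r`-graph `G` with `n > n₀` and `|G| ≥ t_r(n, ℓ-1) - η·C(n,r)` is
`ε`-close to `T_r(n, ℓ-1)`. -/
theorem stability_expansion {α : Type*} [Fintype α] [DecidableEq α]
    (r ℓ : ℕ) (hr : 2 ≤ r) (hrl : r < ℓ)
    (F : SimpleGraph α) [DecidableRel F.Adj] (hχ : F.chromaticNumber = (ℓ : ℕ∞)) :
    ∀ ε : ℝ, 0 < ε → ∃ n₀ : ℕ, 0 < n₀ ∧ ∃ η : ℝ, 0 < η ∧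
      ∀ n : ℕ, n₀ < n → ∀ G : Finset (Finset (Fin n)),
        IsRGraph r G → ¬ ContainsCopy (expansion r F) G →
        (turanNum r n (ℓ - 1) : ℝ) - η * (n.choose r) ≤ (G.card : ℝ) →
        EpsClose r n ε G (turanGraph r n (ℓ - 1)) := by
  intro ε hε
  obtain ⟨k, rfl⟩ : ∃ k, ℓ = k + 1 := ⟨ℓ - 1, by omega⟩
  simp only [Nat.add_sub_cancel]
  have hrk : r ≤ k := by omega
  have hk : 0 < k := by omega
  have hk' : (0:ℝ) < k := by exact_mod_cast hk
  have hcol : F.Colorable (k+1) := SimpleGraph.chromaticNumber_le_iff_colorable.1 hχ.le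
  obtain ⟨col⟩ := hcol
  set C0 : ℝ := 2^r * r.factorial with hC0
  have hfac : (0:ℝ) < r.factorial := by exact_mod_cast r.factorial_pos
  have hC0p : 0 < C0 := by positivity
  set θ : ℝ := ε / (16 * C0) with hθ
  have hθp : 0 < θ := by positivity
  set ε1 : ℝ := min θ ((θ/k)^2 / 2) with hε1
  have hε1p : 0 < ε1 := by positivity
  obtain ⟨δ, hδ, hstruct⟩ := se_struct k r hr hrk ε1 hε1p
  set γ : ℝ := min θ (δ / (4 * r.factorial)) with hγ
  have hγp : 0 < γ := by positivity
  set η : ℝ := min (ε/2) (δ/4) with hη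
  have hηp : 0 < η := by positivity
  obtain ⟨n₁, hn₁⟩ := se_kst α (k+1) δ hδ
  obtain ⟨n₂, hn₂⟩ := se_turan_lower r k hk hrk (δ/2) (by positivity)
  set m : ℝ := ((r-2 : ℕ):ℝ) * ((Fintype.card α + Fintype.card F.edgeFinset * (r-2) : ℕ):ℝ) with hm
  obtain ⟨n₃, hn₃⟩ := exists_nat_gt (m / γ)
  obtain ⟨n₄, hn₄⟩ := exists_nat_gt ((k:ℝ) / θ)
  refine ⟨n₁ + n₂ + n₃ + n₄ + 2 * r + 1, by omega, η, hηp, fun n hn G hG hfree hGc => ?_⟩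
  have hn0 : 0 < n := by omega
  have hn' : (0:ℝ) < n := by exact_mod_cast hn0
  have hnm : m < γ * n := by
    rw [div_lt_iff₀ hγp] at hn₃
    have : (n₃:ℝ) ≤ n := by exact_mod_cast (by omega : n₃ ≤ n)
    nlinarith
  have hnk : (k:ℝ) ≤ θ * n := by
    rw [div_lt_iff₀ hθp] at hn₄
    have : (n₄:ℝ) ≤ n := by exact_mod_cast (by omega : n₄ ≤ n)
    nlinarith
  have hchoose : (n:ℝ)^r ≤ C0 * (n.choose r) := by
    have h1 : ((n + 1 - r : ℕ):ℝ)^r ≤ r.factorial * n.choose r := by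
      exact_mod_cast Nat.pow_sub_le_descFactorial n r |>.trans (Nat.descFactorial_eq_factorial_mul_choose n r).le
    have h2 : (n:ℝ) ≤ 2 * ((n + 1 - r : ℕ):ℝ) := by exact_mod_cast (by omega : n ≤ 2 * (n + 1 - r))
    calc (n:ℝ)^r ≤ (2 * ((n + 1 - r : ℕ):ℝ))^r := pow_le_pow_left₀ hn'.le h2 r
      _ = 2^r * ((n + 1 - r : ℕ):ℝ)^r := by rw [mul_pow]
      _ ≤ 2^r * (r.factorial * n.choose r) := mul_le_mul_of_nonneg_left h1 (by positivity)
      _ = _ := by rw [hC0]; ring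
  have hchoose2 : (r.factorial : ℝ) * n.choose r ≤ (n:ℝ)^r := by
    exact_mod_cast (Nat.descFactorial_eq_factorial_mul_choose n r).symm.le.trans (Nat.descFactorial_le_pow n r)
  set P := seHeavy r G γ with hP
  -- few cliques
  have hX1 : seX P (k+1) ≤ δ * (n:ℝ)^(k+1) := by
    classical
    by_contra hc
    push Not at hc
    obtain ⟨y, hyi, hy⟩ := hn₁ n (by omega) (univ.filter (fun x => SeCl P (k+1) x)) (by
      rw [seX, Finset.sum_boole] at hc
      convert hc.le)
    have hadj : ∀ u v : α, col u ≠ col v → P.Adj (y (col u) u) (y (col v) v) := by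
      intro u v huv
      have := hy (fun i => if i = col u then u else v)
      simp only [mem_filter, mem_univ, true_and] at this
      have := this (col u) (col v) huv
      simpa [huv.symm] using this
    apply hfree
    apply se_embed r hr F hn0 G hG γ hγp (fun u => y (col u) u)
    · intro u v huv
      by_cases h : col u = col v
      · have huv' : y (col u) u = y (col v) v := huv
        rw [← h] at huv'
        exact hyi _ huv'
      · exact absurd huv (hadj u v h).ne
    · intro u v huv
      have := (hadj u v (col.valid huv)).2
      convert this
    · exact hnm
  have hlight := se_light_card r hr G hG γ hγp
  have hXr : (sePi k r - δ) * (n:ℝ)^r ≤ seX P r := by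
    refine le_trans ?_ (se_X_lower r G hG P)
    have h1 := hn₂ n (by omega)
    have hγ2 : γ * r.factorial ≤ δ / 4 := by
      have : γ ≤ δ / (4 * r.factorial) := min_le_right _ _
      rw [le_div_iff₀ (by positivity)] at this
      linarith
    have hη2 : η ≤ δ / 4 := min_le_right _ _
    have h2 : (seLight G P).card * (r.factorial:ℝ) ≤ δ / 4 * (n:ℝ)^r := by
      have := mul_le_mul_of_nonneg_right hlight hfac.le
      have h3 := mul_le_mul_of_nonneg_right hγ2 (by positivity : (0:ℝ) ≤ (n:ℝ)^r)
      linarith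
    have h3 : η * (n.choose r) * (r.factorial:ℝ) ≤ δ / 4 * (n:ℝ)^r := by
      have := mul_le_mul hη2 hchoose2 (by positivity) (by positivity)
      linarith
    have h4 := mul_le_mul_of_nonneg_right hGc hfac.le
    linarith
  obtain ⟨c, hbad, hX2⟩ := hstruct n hn0 P hX1 hXr
  have hbal := se_balance hk P c ε1 hbad hX2
  let τ : Fin n → Fin k := fun x => ⟨(x:ℕ) % k, Nat.mod_lt _ hk⟩
  obtain ⟨σ, hσ⟩ := se_perm c τ
  have hmis : ((univ.filter (fun x => τ (σ x) ≠ c x)).card : ℝ) ≤ 2 * θ * n := by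
    have h1 : ∀ i : Fin k, (((univ.filter (fun x => c x = i)).card -
        (univ.filter (fun x => τ x = i)).card : ℕ) : ℝ) ≤ θ / k * n + 1 := by
      intro i
      have hb : (((univ.filter (fun x => c x = i)).card : ℝ) - n / k) ≤ θ / k * n := by
        apply le_trans (le_abs_self _)
        apply abs_le_of_sq_le_sq _ (by positivity)
        have h2 : ε1 ≤ (θ/k)^2/2 := min_le_right _ _
        have h3 := mul_le_mul_of_nonneg_right h2 (by positivity : (0:ℝ) ≤ (n:ℝ)^2)
        have h4 := hbal i
        calc _ ≤ 2 * ε1 * (n:ℝ)^2 := by convert h4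
          _ ≤ _ := by nlinarith
      have hr' : n / k ≤ (univ.filter (fun x => τ x = i)).card := by
        convert se_residue (n := n) hk i
      have hfl : (n:ℝ) / k ≤ ((n / k : ℕ):ℝ) + 1 := by
        rw [div_le_iff₀ hk']
        have h5 : n ≤ (n / k + 1) * k := by
          have := Nat.div_add_mod n k
          have h3 := Nat.mod_lt n hk
          nlinarith
        exact_mod_cast h5
      have hr2 : ((n / k : ℕ):ℝ) ≤ (univ.filter (fun x => τ x = i)).card := by exact_mod_cast hr'
      rcases le_total (univ.filter (fun x => τ x = i)).card (univ.filter (fun x => c x = i)).card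
        with hle | hle
      · rw [Nat.cast_sub hle]; linarith
      · rw [Nat.sub_eq_zero_of_le hle]
        have : 0 ≤ θ / k * n := by positivity
        simp; linarith
    have h2 : ((univ.filter (fun x => τ (σ x) ≠ c x)).card : ℝ) ≤
        ∑ i : Fin k, (((univ.filter (fun x => c x = i)).card -
        (univ.filter (fun x => τ x = i)).card : ℕ) : ℝ) := by
      have : (univ.filter (fun x => τ (σ x) ≠ c x)).card ≤
        ∑ i : Fin k, ((univ.filter (fun x => c x = i)).card -
        (univ.filter (fun x => τ x = i)).card) := by convert hσ
      exact_mod_cast this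
    calc _ ≤ _ := h2
      _ ≤ ∑ i : Fin k, (θ / k * n + 1) := Finset.sum_le_sum (fun i _ => h1 i)
      _ = θ * n + k := by simp; field_simp
      _ ≤ _ := by linarith
  have hcount := se_count r hr G hG P c τ σ
  refine se_close r k hk ε η (4 * θ * (n:ℝ)^r) G hG σ ?_ hGc ?_
  · have e1 : (seLight G P).card ≤ θ * (n:ℝ)^r :=
      hlight.trans (mul_le_mul_of_nonneg_right (min_le_left _ _) (by positivity))
    have e2 : ε1 * (n:ℝ)^2 * (n:ℝ)^(r-2) ≤ θ * (n:ℝ)^r := by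
      rw [mul_assoc, ← pow_add, show 2 + (r - 2) = r by omega]
      exact mul_le_mul_of_nonneg_right (min_le_left _ _) (by positivity)
    have e3 := mul_le_mul_of_nonneg_right hbad (by positivity : (0:ℝ) ≤ (n:ℝ)^(r-2))
    have e4 := mul_le_mul_of_nonneg_right hmis (by positivity : (0:ℝ) ≤ (n:ℝ)^(r-1))
    have e5 : 2 * θ * n * (n:ℝ)^(r-1) = 2 * θ * (n:ℝ)^r := by
      rw [mul_assoc, ← pow_succ', show r - 1 + 1 = r by omega]
    have e6 : ((G.filter (fun e => ∃ u ∈ e, ∃ v ∈ e, u ≠ v ∧ τ (σ u) = τ (σ v))).card : ℝ) ≤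
        4 * θ * (n:ℝ)^r := by
      refine le_trans ?_ (hcount.trans ?_)
      · apply le_of_eq; congr!
      · have e7 : ((univ.filter (fun x => τ (σ x) ≠ c x)).card : ℝ) * (n:ℝ)^(r-1) ≤ 2 * θ * (n:ℝ)^r :=
          e4.trans e5.le
        have e8 := e3.trans e2
        have : θ * (n:ℝ)^r + θ * (n:ℝ)^r + 2 * θ * (n:ℝ)^r = 4 * θ * (n:ℝ)^r := by ring
        rw [← this]
        refine add_le_add (add_le_add e1 e8) ?_
        convert e7
    exact e6
  · have e1 : η ≤ ε / 2 := min_le_left _ _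
    have e2 := mul_le_mul_of_nonneg_right e1 (by positivity : (0:ℝ) ≤ (n.choose r : ℝ))
    have e3 : 2 * (4 * θ * (n:ℝ)^r) ≤ ε / 2 * (n.choose r) := by
      have := mul_le_mul_of_nonneg_left hchoose (by positivity : (0:ℝ) ≤ 8 * θ)
      have e4 : 8 * θ * (C0 * (n.choose r)) = ε / 2 * (n.choose r) := by
        rw [hθ]; field_simp; ring
      linarith
    linarith
end
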